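/- Given C > 1, μ > 0, c > 0, d ≥ 2 and p ∈ {1,…,d−1}, there exist L ∈ ℕ and δ > 0 with the following property. Let I ⊆ ℤ be an interval and (g_i)_{i∈I} elements of GL(d,ℝ) with ‖g_i‖ ≤ C and ‖g_i⁻¹‖ ≤ C for all i ∈ I, such that σ_{p+1}(g_m⋯g_{n+1}g_n)/σ_p(g_m⋯g_{n+1}g_n) ≤ c·e^{−μ(m−n+1)} for all n ≤ m in I. Then for all n < k < m in I with min{k−n, m−k} > L, the products g_{k−1}⋯g_{n+1}g_n and g_k⁻¹g_{k+1}⁻¹⋯g_{m−1}⁻¹ have gaps of index p and d−p respectively, and ∠(U_p(g_{k−1}⋯g_{n+1}g_n), U_{d−p}(g_k⁻¹g_{k+1}⁻¹⋯g_{m−1}⁻¹)) > δ. -/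

import Mathlib

noncomputable section

open scoped Matrix RealInnerProductSpace
open Filter Topology

namespace Paper

abbrev Euc (d : ℕ) : Type := EuclideanSpace ℝ (Fin d)

/-- The action of a `d × d` real matrix on Euclidean space. -/
def act {d : ℕ} (g : Matrix (Fin d) (Fin d) ℝ) (v : Euc d) : Euc d :=
  Matrix.toEuclideanCLM (𝕜 := ℝ) g v

/-- The operator norm of a matrix acting on Euclidean space. -/
def opNorm {d : ℕ} (g : Matrix (Fin d) (Fin d) ℝ) : ℝ :=
  ‖(Matrix.toEuclideanCLM (𝕜 := ℝ) g : Euc d →L[ℝ] Euc d)‖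

/-- The underlying matrix of an element of `GL (Fin d) ℝ`. -/
def mat {d : ℕ} (g : GL (Fin d) ℝ) : Matrix (Fin d) (Fin d) ℝ := ↑g

/-- The `p`-th singular value (`1`-indexed), via the min-max characterization:
`σ_p(g)` is the largest, over `p`-dimensional subspaces `P`, of the minimal
stretch of unit vectors of `P`. -/
def sv {d : ℕ} (g : Matrix (Fin d) (Fin d) ℝ) (p : ℕ) : ℝ :=
  sSup { r | ∃ P : Submodule ℝ (Euc d), Module.finrank ℝ P = p ∧
      r = sInf { t | ∃ v ∈ P, ‖v‖ = 1 ∧ t = ‖act g v‖ } }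

/-- `g` has a gap of index `p` if `σ_p(g) > σ_{p+1}(g)`. -/
def HasGap {d : ℕ} (g : Matrix (Fin d) (Fin d) ℝ) (p : ℕ) : Prop :=
  sv g (p + 1) < sv g p

/-- `U` is a Cartan attractor of index `p` for `g`: for some singular value
decomposition `g = k·a·l` (`k`, `l` orthogonal, `a` diagonal with decreasing
nonnegative entries), `U` is the span of the first `p` columns of `k`. -/
def IsCartanAttractor {d : ℕ} (g : Matrix (Fin d) (Fin d) ℝ) (p : ℕ)
    (U : Submodule ℝ (Euc d)) : Prop :=
  ∃ k l : Matrix (Fin d) (Fin d) ℝ, ∃ σ : Fin d → ℝ,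
    k ∈ Matrix.unitaryGroup (Fin d) ℝ ∧ l ∈ Matrix.unitaryGroup (Fin d) ℝ ∧
    (∀ i j : Fin d, i ≤ j → σ j ≤ σ i) ∧ (∀ i, 0 ≤ σ i) ∧
    g = k * Matrix.diagonal σ * l ∧
    U = Submodule.span ℝ { x : Euc d | ∃ i : Fin d, (i : ℕ) < p ∧
          x = (EuclideanSpace.equiv (Fin d) ℝ).symm (fun j => k j i) }

/-- The Cartan attractor `U_p(g)`; when `g` has a gap of index `p` it is the
unique subspace satisfying `IsCartanAttractor g p`. -/
def cartanAttractor {d : ℕ} (g : Matrix (Fin d) (Fin d) ℝ) (p : ℕ) :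
    Submodule ℝ (Euc d) :=
  letI := Classical.propDecidable (∃ U, IsCartanAttractor g p U)
  if h : ∃ U, IsCartanAttractor g p U then h.choose else ⊥

/-- The angle `∠(P,Q)` between two subspaces: the infimum of angles between
nonzero vectors of `P` and `Q`. -/
def subAngle {d : ℕ} (P Q : Submodule ℝ (Euc d)) : ℝ :=
  sInf { θ | ∃ v ∈ P, v ≠ 0 ∧ ∃ w ∈ Q, w ≠ 0 ∧ θ = InnerProductGeometry.angle v w }

/-- `sin ∠(v,w)`. -/
def sinAngle {d : ℕ} (v w : Euc d) : ℝ := Real.sin (InnerProductGeometry.angle v w)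

/-- The distance `d(P,Q) = max_{v ∈ P∖{0}} min_{w ∈ Q∖{0}} sin ∠(v,w)`. -/
def grassDist {d : ℕ} (P Q : Submodule ℝ (Euc d)) : ℝ :=
  sSup { r | ∃ v ∈ P, v ≠ 0 ∧
      r = sInf { s | ∃ w ∈ Q, w ≠ 0 ∧ s = sinAngle v w } }

/-- The image `g·P` of a subspace under a matrix. -/
def mapMat {d : ℕ} (g : Matrix (Fin d) (Fin d) ℝ) (P : Submodule ℝ (Euc d)) :
    Submodule ℝ (Euc d) :=
  P.map ((Matrix.toEuclideanCLM (𝕜 := ℝ) g : Euc d →L[ℝ] Euc d) : Euc d →ₗ[ℝ] Euc d)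

/-- `m(g|_W)`, the minimal stretch of unit vectors of `W` under `g`. -/
def minRestrict {d : ℕ} (g : Matrix (Fin d) (Fin d) ℝ) (W : Submodule ℝ (Euc d)) : ℝ :=
  sInf { t | ∃ v ∈ W, ‖v‖ = 1 ∧ t = ‖act g v‖ }

/-- `‖g|_W‖`, the maximal stretch of unit vectors of `W` under `g`. -/
def normRestrict {d : ℕ} (g : Matrix (Fin d) (Fin d) ℝ) (W : Submodule ℝ (Euc d)) : ℝ :=
  sSup { t | ∃ v ∈ W, ‖v‖ = 1 ∧ t = ‖act g v‖ }


/-- `prodSeq g n k = g (n+k-1) * ⋯ * g (n+1) * g n`. -/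
def prodSeq {d : ℕ} (g : ℤ → GL (Fin d) ℝ) (n : ℤ) : ℕ → GL (Fin d) ℝ
  | 0 => 1
  | k + 1 => g (n + k) * prodSeq g n k

section Helpers

open scoped Matrix.Norms.L2Operator


abbrev Mt (d : ℕ) : Type := Matrix (Fin d) (Fin d) ℝ

lemma act_mul {d : ℕ} (g h : Mt d) (v : Euc d) : act (g * h) v = act g (act h v) := by
  simp [act]

lemma act_one {d : ℕ} (v : Euc d) : act (1 : Mt d) v = v := by
  simp [act]

lemma act_sub {d : ℕ} (g : Mt d) (v w : Euc d) : act g (v - w) = act g v - act g w := by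
  simp [act]

lemma act_add {d : ℕ} (g : Mt d) (v w : Euc d) : act g (v + w) = act g v + act g w := by
  simp [act]

lemma act_smul {d : ℕ} (g : Mt d) (r : ℝ) (v : Euc d) : act g (r • v) = r • act g v := by
  simp [act]

lemma add_act {d : ℕ} (g h : Mt d) (v : Euc d) : act (g + h) v = act g v + act h v := by
  simp [act]

lemma sub_act {d : ℕ} (g h : Mt d) (v : Euc d) : act (g - h) v = act g v - act h v := by
  simp [act]

lemma norm_act_le {d : ℕ} (g : Mt d) (v : Euc d) : ‖act g v‖ ≤ ‖g‖ * ‖v‖ := by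
  exact (Matrix.toEuclideanCLM (𝕜 := ℝ) g).le_opNorm v

lemma act_apply {d : ℕ} (g : Mt d) (v : Euc d) (i : Fin d) :
    act g v i = ∑ j, g i j * v j := by
  simp [act, Matrix.mulVec, dotProduct]

lemma act_diag {d : ℕ} (s : Fin d → ℝ) (v : Euc d) (i : Fin d) :
    act (Matrix.diagonal s) v i = s i * v i := by
  simp [act, Matrix.mulVec_diagonal]

lemma opNorm_eq {d : ℕ} (g : Mt d) : opNorm g = ‖g‖ := rfl

lemma unit_star_mul {d : ℕ} {k : Mt d} (hk : k ∈ Matrix.unitaryGroup (Fin d) ℝ) :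
    star k * k = 1 := (Unitary.mem_iff.1 hk).1

lemma unit_mul_star {d : ℕ} {k : Mt d} (hk : k ∈ Matrix.unitaryGroup (Fin d) ℝ) :
    k * star k = 1 := (Unitary.mem_iff.1 hk).2

lemma unit_star_mem {d : ℕ} {k : Mt d} (hk : k ∈ Matrix.unitaryGroup (Fin d) ℝ) :
    star k ∈ Matrix.unitaryGroup (Fin d) ℝ := by
  exact Unitary.star_mem hk

lemma norm_diag_le {d : ℕ} (v : Fin d → ℝ) (r : ℝ) (hr : 0 ≤ r) (h : ∀ i, |v i| ≤ r) :
    ‖(Matrix.diagonal v : Mt d)‖ ≤ r := by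
  rw [Matrix.l2_opNorm_diagonal]
  exact (pi_norm_le_iff_of_nonneg hr).2 h

lemma norm_one_le {d : ℕ} : ‖(1 : Mt d)‖ ≤ 1 := by
  rw [← Matrix.diagonal_one]
  exact norm_diag_le _ 1 zero_le_one (by simp)

lemma norm_unit_le {d : ℕ} {k : Mt d} (hk : k ∈ Matrix.unitaryGroup (Fin d) ℝ) : ‖k‖ ≤ 1 := by
  have h : ‖star k * k‖ = ‖k‖ * ‖k‖ := CStarRing.norm_star_mul_self
  rw [unit_star_mul hk] at h
  have := norm_one_le (d := d)
  nlinarith [norm_nonneg k]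

lemma norm_act_unit {d : ℕ} {k : Mt d} (hk : k ∈ Matrix.unitaryGroup (Fin d) ℝ) (v : Euc d) :
    ‖act k v‖ = ‖v‖ := by
  apply le_antisymm
  · have := norm_act_le k v
    nlinarith [norm_unit_le hk, norm_nonneg v]
  · have h1 : v = act (star k) (act k v) := by rw [← act_mul, unit_star_mul hk, act_one]
    have := norm_act_le (star k) (act k v)
    rw [← h1] at this
    nlinarith [norm_unit_le (unit_star_mem hk), norm_nonneg (act k v)]

/-- singular value decomposition data -/
structure IsSVD {d : ℕ} (A k l : Mt d) (s : Fin d → ℝ) : Prop where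
  hk : k ∈ Matrix.unitaryGroup (Fin d) ℝ
  hl : l ∈ Matrix.unitaryGroup (Fin d) ℝ
  anti : ∀ i j : Fin d, i ≤ j → s j ≤ s i
  nonneg : ∀ i, 0 ≤ s i
  eq : A = k * Matrix.diagonal s * l

/-- projection to the first `p` coordinates -/
def Jp (d p : ℕ) : Mt d := Matrix.diagonal (fun i => if (i : ℕ) < p then 1 else 0)

/-- projection to the last coordinates -/
def Jq (d p : ℕ) : Mt d := Matrix.diagonal (fun i => if (i : ℕ) < p then 0 else 1)

lemma Jp_add_Jq (d p : ℕ) : Jp d p + Jq d p = 1 := by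
  rw [Jp, Jq, Matrix.diagonal_add, ← Matrix.diagonal_one]
  congr 1; ext i; split_ifs <;> simp

lemma Jp_mul_Jp (d p : ℕ) : Jp d p * Jp d p = Jp d p := by
  simp [Jp, Matrix.diagonal_mul_diagonal]

lemma Jq_mul_Jq (d p : ℕ) : Jq d p * Jq d p = Jq d p := by
  simp [Jq, Matrix.diagonal_mul_diagonal]

lemma Jp_mul_Jq (d p : ℕ) : Jp d p * Jq d p = 0 := by
  rw [Jp, Jq, Matrix.diagonal_mul_diagonal, ← Matrix.diagonal_zero]
  congr 1; ext i; split_ifs <;> simp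

lemma Jq_mul_Jp (d p : ℕ) : Jq d p * Jp d p = 0 := by
  rw [Jp, Jq, Matrix.diagonal_mul_diagonal, ← Matrix.diagonal_zero]
  congr 1; ext i; split_ifs <;> simp

lemma Jp_comm (d p : ℕ) (s : Fin d → ℝ) :
    Jp d p * Matrix.diagonal s = Matrix.diagonal s * Jp d p := by
  rw [Jp, Matrix.diagonal_mul_diagonal, Matrix.diagonal_mul_diagonal]
  congr 1; ext i; ring

lemma Jq_comm (d p : ℕ) (s : Fin d → ℝ) :
    Jq d p * Matrix.diagonal s = Matrix.diagonal s * Jq d p := by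
  rw [Jq, Matrix.diagonal_mul_diagonal, Matrix.diagonal_mul_diagonal]
  congr 1; ext i; ring

lemma star_Jp (d p : ℕ) : star (Jp d p) = Jp d p := by
  simp [Jp, Matrix.star_eq_conjTranspose]

lemma star_Jq (d p : ℕ) : star (Jq d p) = Jq d p := by
  simp [Jq, Matrix.star_eq_conjTranspose]

lemma norm_Jp_le (d p : ℕ) : ‖Jp d p‖ ≤ 1 :=
  norm_diag_le _ 1 zero_le_one (fun i => by split_ifs <;> simp)

lemma norm_Jq_le (d p : ℕ) : ‖Jq d p‖ ≤ 1 :=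
  norm_diag_le _ 1 zero_le_one (fun i => by split_ifs <;> simp)

lemma norm_Jq_diag {d p : ℕ} {A k l : Mt d} {s : Fin d → ℝ} (h : IsSVD A k l s) (hp : p < d) :
    ‖Jq d p * Matrix.diagonal s‖ ≤ s ⟨p, hp⟩ := by
  rw [Jq, Matrix.diagonal_mul_diagonal]
  refine norm_diag_le _ _ (h.nonneg _) (fun i => ?_)
  split_ifs with hi
  · simpa using h.nonneg _
  · rw [one_mul, abs_of_nonneg (h.nonneg _)]
    exact h.anti _ _ (by rw [Fin.le_def]; simpa using hi)

/-- partial inverse of the diagonal part -/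
def Ep (d p : ℕ) (s : Fin d → ℝ) : Mt d :=
  Matrix.diagonal (fun i => if (i : ℕ) < p then (s i)⁻¹ else 0)

lemma norm_Ep_le {d p : ℕ} {A k l : Mt d} {s : Fin d → ℝ} (h : IsSVD A k l s) (hp : p - 1 < d)
    (hp1 : 1 ≤ p) (hpos : 0 < s ⟨p - 1, hp⟩) :
    ‖Ep d p s‖ ≤ (s ⟨p - 1, hp⟩)⁻¹ := by
  refine norm_diag_le _ _ (inv_nonneg.2 hpos.le) (fun i => ?_)
  split_ifs with hi
  · have : s ⟨p - 1, hp⟩ ≤ s i := h.anti _ _ (by rw [Fin.le_def]; simp; omega)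
    rw [abs_of_nonneg (inv_nonneg.2 (h.nonneg _))]
    exact inv_anti₀ hpos this
  · simpa using hpos.le

lemma diag_mul_Ep {d p : ℕ} {A k l : Mt d} {s : Fin d → ℝ} (h : IsSVD A k l s) (hp : p - 1 < d)
    (hp1 : 1 ≤ p) (hpos : 0 < s ⟨p - 1, hp⟩) :
    Matrix.diagonal s * Ep d p s = Jp d p := by
  rw [Ep, Jp, Matrix.diagonal_mul_diagonal]
  congr 1; ext i
  split_ifs with hi
  · have : s ⟨p - 1, hp⟩ ≤ s i := h.anti _ _ (by rw [Fin.le_def]; simp; omega)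
    exact mul_inv_cancel₀ (by linarith)
  · simp

lemma Ep_mul_diag {d p : ℕ} {A k l : Mt d} {s : Fin d → ℝ} (h : IsSVD A k l s) (hp : p - 1 < d)
    (hp1 : 1 ≤ p) (hpos : 0 < s ⟨p - 1, hp⟩) :
    Ep d p s * Matrix.diagonal s = Jp d p := by
  rw [← diag_mul_Ep h hp hp1 hpos, Ep, Matrix.diagonal_mul_diagonal, Matrix.diagonal_mul_diagonal]
  congr 1; ext i; ring

lemma norm_mul3_le {d : ℕ} (a b c : Mt d) {x y z : ℝ} (ha : ‖a‖ ≤ x) (hb : ‖b‖ ≤ y)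
    (hc : ‖c‖ ≤ z) : ‖a * b * c‖ ≤ x * y * z := by
  have h1 := norm_mul_le (a * b) c
  have h2 := norm_mul_le a b
  have h3 := norm_nonneg a
  have h4 := norm_nonneg b
  have h5 := norm_nonneg c
  have : ‖a‖ * ‖b‖ ≤ x * y := by gcongr; linarith
  calc _ ≤ ‖a * b‖ * ‖c‖ := h1
    _ ≤ (x * y) * z := by gcongr <;> nlinarith

lemma norm_conj_le {d : ℕ} {k l : Mt d} (hk : ‖k‖ ≤ 1) (hl : ‖l‖ ≤ 1) (D : Mt d) :
    ‖k * D * l‖ ≤ ‖D‖ := by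
  simpa using norm_mul3_le k D l hk le_rfl hl

lemma cmp_U {d p : ℕ} {A1 k1 l1 A2 k2 l2 D : Mt d} {s1 s2 : Fin d → ℝ}
    (h1 : IsSVD A1 k1 l1 s1) (h2 : IsSVD A2 k2 l2 s2) (hp : p < d) (hp1 : 1 ≤ p)
    (hpos : 0 < s2 ⟨p - 1, by omega⟩) (hD : A2 = A1 * D) :
    ‖Jq d p * (star k1 * k2) * Jp d p‖ ≤ s1 ⟨p, hp⟩ * ‖D‖ * (s2 ⟨p - 1, by omega⟩)⁻¹ := by
  have e1 : k2 * Matrix.diagonal s2 = k1 * Matrix.diagonal s1 * l1 * D * star l2 := by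
    rw [← h1.eq, ← hD, h2.eq, mul_assoc, unit_mul_star h2.hl, mul_one]
  have e2 : Jq d p * (star k1 * k2) * Jp d p =
      (Jq d p * Matrix.diagonal s1) * (l1 * D * star l2) * Ep d p s2 := by
    rw [← diag_mul_Ep h2 _ hp1 hpos]
    calc _ = Jq d p * star k1 * (k2 * Matrix.diagonal s2) * Ep d p s2 := by noncomm_ring
      _ = Jq d p * (star k1 * k1) * Matrix.diagonal s1 * l1 * D * star l2 * Ep d p s2 := by
        rw [e1]; noncomm_ring
      _ = _ := by rw [unit_star_mul h1.hk]; noncomm_ring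
  rw [e2]
  exact norm_mul3_le _ _ _ (norm_Jq_diag h1 hp)
    (norm_conj_le (norm_unit_le h1.hl) (norm_unit_le (unit_star_mem h2.hl)) D)
    (norm_Ep_le h2 _ hp1 hpos)

lemma cmp_R {d p : ℕ} {A1 k1 l1 A2 k2 l2 D : Mt d} {s1 s2 : Fin d → ℝ}
    (h1 : IsSVD A1 k1 l1 s1) (h2 : IsSVD A2 k2 l2 s2) (hp : p < d) (hp1 : 1 ≤ p)
    (hpos : 0 < s2 ⟨p - 1, by omega⟩) (hD : A2 = D * A1) :
    ‖Jp d p * (l2 * star l1) * Jq d p‖ ≤ (s2 ⟨p - 1, by omega⟩)⁻¹ * ‖D‖ * s1 ⟨p, hp⟩ := by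
  have e1 : Matrix.diagonal s2 * l2 = star k2 * D * k1 * Matrix.diagonal s1 * l1 := by
    calc _ = (star k2 * k2) * Matrix.diagonal s2 * l2 := by rw [unit_star_mul h2.hk, one_mul]
      _ = star k2 * A2 := by rw [h2.eq]; noncomm_ring
      _ = _ := by rw [hD, h1.eq]; noncomm_ring
  have e2 : Jp d p * (l2 * star l1) * Jq d p =
      Ep d p s2 * (star k2 * D * k1) * (Jq d p * Matrix.diagonal s1) := by
    rw [← Ep_mul_diag h2 _ hp1 hpos, Jq_comm]
    calc _ = Ep d p s2 * (Matrix.diagonal s2 * l2) * star l1 * Jq d p := by noncomm_ring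
      _ = Ep d p s2 * star k2 * D * k1 * Matrix.diagonal s1 * (l1 * star l1) * Jq d p := by
        rw [e1]; noncomm_ring
      _ = _ := by rw [unit_mul_star h1.hl]; noncomm_ring
  rw [e2]
  exact norm_mul3_le _ _ _ (norm_Ep_le h2 _ hp1 hpos)
    (norm_conj_le (norm_unit_le (unit_star_mem h2.hk)) (norm_unit_le h1.hk) D)
    (norm_Jq_diag h1 hp)

/-- dimension count -/
lemma exists_vec {d : ℕ} (P : Submodule ℝ (Euc d)) (q : ℕ) (hq : q < Module.finrank ℝ P)
    (L : Mt d) : ∃ x ∈ P, ‖x‖ = 1 ∧ ∀ j : Fin d, (j : ℕ) < q → act L x j = 0 := by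
  let f : P →ₗ[ℝ] (Fin q → ℝ) :=
    { toFun := fun x i => if h : (i : ℕ) < d then act L (x : Euc d) ⟨i, h⟩ else 0
      map_add' := by
        intro x y; ext i; simp only [Submodule.coe_add, act_add, Pi.add_apply]
        split_ifs <;> simp
      map_smul' := by
        intro r x; ext i; simp only [Submodule.coe_smul, act_smul, Pi.smul_apply]
        split_ifs <;> simp }
  have hker : LinearMap.ker f ≠ ⊥ := LinearMap.ker_ne_bot_of_finrank_lt (by simpa using hq)
  obtain ⟨x, hx, hx0⟩ := (Submodule.ne_bot_iff _).1 hker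
  have hx0' : (x : Euc d) ≠ 0 := by simpa using hx0
  have hn : ‖(x : Euc d)‖ ≠ 0 := norm_ne_zero_iff.2 hx0'
  refine ⟨(‖(x : Euc d)‖)⁻¹ • (x : Euc d), P.smul_mem _ x.2, ?_, ?_⟩
  · rw [norm_smul, norm_inv, norm_norm, inv_mul_cancel₀ hn]
  · intro j hj
    have := congrFun (LinearMap.mem_ker.1 hx) ⟨j, hj⟩
    have h2 : act L (x : Euc d) j = 0 := by simpa [f] using this
    rw [act_smul, PiLp.smul_apply, h2, smul_zero]

/-- lower bound of stretch -/
lemma norm_diag_ge {d : ℕ} {A k l : Mt d} {s : Fin d → ℝ} (h : IsSVD A k l s) (i : Fin d)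
    (v : Euc d) (hv : ∀ j, i < j → v j = 0) :
    s i * ‖v‖ ≤ ‖act (Matrix.diagonal s) v‖ := by
  rw [← abs_of_nonneg (h.nonneg i), ← Real.norm_eq_abs, ← norm_smul]
  rw [EuclideanSpace.norm_eq, EuclideanSpace.norm_eq]
  apply Real.sqrt_le_sqrt
  apply Finset.sum_le_sum
  intro j _
  rw [act_diag, PiLp.smul_apply, smul_eq_mul, norm_mul, norm_mul]
  simp only [Real.norm_eq_abs, abs_of_nonneg (h.nonneg _)]
  by_cases hj : i < j
  · simp [hv j hj]
  · have := h.anti j i (not_lt.1 hj)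
    have := h.nonneg i
    gcongr

lemma norm_diag_le_vec {d : ℕ} {A k l : Mt d} {s : Fin d → ℝ} (h : IsSVD A k l s) (i : Fin d)
    (v : Euc d) (hv : ∀ j, j < i → v j = 0) :
    ‖act (Matrix.diagonal s) v‖ ≤ s i * ‖v‖ := by
  rw [← abs_of_nonneg (h.nonneg i), ← Real.norm_eq_abs, ← norm_smul]
  rw [EuclideanSpace.norm_eq, EuclideanSpace.norm_eq]
  apply Real.sqrt_le_sqrt
  apply Finset.sum_le_sum
  intro j _
  rw [act_diag, PiLp.smul_apply, smul_eq_mul, norm_mul, norm_mul]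
  simp only [Real.norm_eq_abs, abs_of_nonneg (h.nonneg _)]
  by_cases hj : j < i
  · simp [hv j hj]
  · have := h.anti i j (not_lt.1 hj)
    have := h.nonneg j
    gcongr

lemma norm_svd_act {d : ℕ} {A k l : Mt d} {s : Fin d → ℝ} (h : IsSVD A k l s) (v : Euc d) :
    ‖act A v‖ = ‖act (Matrix.diagonal s) (act l v)‖ := by
  rw [h.eq, act_mul, act_mul, norm_act_unit h.hk]

/-- the span of the first `q` right singular vectors -/
def firstR {d : ℕ} (l : Mt d) (q : ℕ) : Submodule ℝ (Euc d) where
  carrier := {v | ∀ j : Fin d, q ≤ (j : ℕ) → act l v j = 0}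
  add_mem' := by
    intro a b ha hb j hj
    rw [act_add, PiLp.add_apply, ha j hj, hb j hj, add_zero]
  zero_mem' := by
    intro j _
    have := act_smul l 0 0
    rw [zero_smul, zero_smul] at this
    rw [this]; rfl
  smul_mem' := by
    intro r a ha j hj
    rw [act_smul, PiLp.smul_apply, ha j hj, smul_zero]

lemma act_single_star {d : ℕ} {l : Mt d} (hl : l ∈ Matrix.unitaryGroup (Fin d) ℝ) (v : Euc d) :
    act l (act (star l) v) = v := by
  rw [← act_mul, unit_mul_star hl, act_one]

lemma act_star_act {d : ℕ} {l : Mt d} (hl : l ∈ Matrix.unitaryGroup (Fin d) ℝ) (v : Euc d) :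
    act (star l) (act l v) = v := by
  rw [← act_mul, unit_star_mul hl, act_one]

lemma finrank_firstR {d : ℕ} {l : Mt d} (hl : l ∈ Matrix.unitaryGroup (Fin d) ℝ) (q : ℕ)
    (hq : q ≤ d) : Module.finrank ℝ (firstR l q) = q := by
  let e : firstR l q ≃ₗ[ℝ] (Fin q → ℝ) :=
    { toFun := fun x i => act l (x : Euc d) ⟨i, by omega⟩
      map_add' := by
        intro x y; ext i; simp [act_add]
      map_smul' := by
        intro r x; ext i; simp [act_smul]
      invFun := fun y => ⟨act (star l) (WithLp.toLp 2 (fun j : Fin d =>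
          if h : (j : ℕ) < q then y ⟨j, h⟩ else 0)), by
            intro j hj
            rw [act_single_star hl]
            simp [not_lt.2 hj]⟩
      left_inv := by
        intro x
        apply Subtype.ext
        simp only
        conv_rhs => rw [← act_star_act hl (x : Euc d)]
        congr 1
        ext j
        simp only
        split_ifs with h
        · rfl
        · exact (x.2 j (not_lt.1 h)).symm
      right_inv := by
        intro y
        ext i
        simp only [act_single_star hl]
        simp }
  rw [e.finrank_eq]; simp

lemma svd_le {d : ℕ} {A k l G k' l' D D' : Mt d} {s s' : Fin d → ℝ} (h : IsSVD A k l s)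
    (h' : IsSVD G k' l' s') (hG : G = D * A * D') (i : Fin d) :
    s' i ≤ ‖D‖ * s i * ‖D'‖ := by
  obtain ⟨x, hxP, hx1, hx⟩ := exists_vec (firstR l' (i + 1)) i
    (by rw [finrank_firstR h'.hl _ (by omega)]; omega) (l * D')
  have h1 : s' i * ‖act l' x‖ ≤ ‖act G x‖ := by
    rw [norm_svd_act h']
    exact norm_diag_ge h' i _ (fun j hj => hxP j (by rw [Fin.lt_def] at hj; omega))
  rw [norm_act_unit h'.hl, hx1, mul_one] at h1
  have h2 : ‖act A (act D' x)‖ ≤ s i * ‖act D' x‖ := by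
    rw [norm_svd_act h, ← norm_act_unit h.hl (act D' x)]
    apply norm_diag_le_vec h i
    intro j hj
    rw [← act_mul]
    exact hx j hj
  rw [hG, act_mul, act_mul] at h1
  have h3 := norm_act_le D (act A (act D' x))
  have h4 := norm_act_le D' x
  rw [hx1, mul_one] at h4
  have := h.nonneg i
  calc s' i ≤ ‖D‖ * ‖act A (act D' x)‖ := h1.trans h3
    _ ≤ ‖D‖ * (s i * ‖D'‖) := by gcongr; exact h2.trans (by gcongr)
    _ = _ := by ring

lemma sv_eq {d : ℕ} {A k l : Mt d} {s : Fin d → ℝ} (h : IsSVD A k l s) (q : ℕ) (hq : q < d) :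
    sv A (q + 1) = s ⟨q, hq⟩ := by
  apply IsGreatest.csSup_eq
  constructor
  · refine ⟨firstR l (q + 1), finrank_firstR h.hl _ (by omega), ?_⟩
    symm
    apply IsLeast.csInf_eq
    constructor
    · refine ⟨act (star l) (EuclideanSpace.single ⟨q, hq⟩ 1), ?_, ?_, ?_⟩
      · intro j hj
        rw [act_single_star h.hl, PiLp.single_apply, if_neg]
        intro hj'; rw [hj'] at hj; simp at hj
      · rw [norm_act_unit (unit_star_mem h.hl)]; simp
      · rw [norm_svd_act h, act_single_star h.hl]
        have : act (Matrix.diagonal s) (EuclideanSpace.single ⟨q, hq⟩ 1) =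
            s ⟨q, hq⟩ • EuclideanSpace.single ⟨q, hq⟩ (1 : ℝ) := by
          ext j
          rw [act_diag, PiLp.smul_apply, PiLp.single_apply]
          split_ifs with hj
          · rw [hj]; rfl
          · simp
        rw [this, norm_smul, Real.norm_eq_abs, abs_of_nonneg (h.nonneg _)]; simp
    · rintro t ⟨v, hv, hv1, rfl⟩
      have := norm_diag_ge h ⟨q, hq⟩ (act l v) (fun j hj => hv j (by
        rw [Fin.lt_def] at hj; exact hj))
      rw [norm_act_unit h.hl, hv1, mul_one] at this
      rwa [norm_svd_act h]
  · rintro r ⟨P, hP, rfl⟩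
    obtain ⟨x, hxP, hx1, hx⟩ := exists_vec P q (by omega) l
    have h2 : ‖act A x‖ ≤ s ⟨q, hq⟩ * ‖x‖ := by
      rw [norm_svd_act h, ← norm_act_unit h.hl x]
      exact norm_diag_le_vec h _ _ (fun j hj => hx j hj)
    rw [hx1, mul_one] at h2
    refine le_trans (csInf_le ⟨0, ?_⟩ ⟨x, hxP, hx1, rfl⟩) h2
    rintro t ⟨v, _, _, rfl⟩
    exact norm_nonneg _


lemma perm_unit {d : ℕ} {k : Mt d} (hk : k ∈ Matrix.unitaryGroup (Fin d) ℝ)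
    (e : Fin d ≃ Fin d) : k.submatrix id e ∈ Matrix.unitaryGroup (Fin d) ℝ := by
  rw [Matrix.mem_unitaryGroup_iff']
  have h : star (k.submatrix id e) = (star k).submatrix e id := by
    rw [Matrix.star_eq_conjTranspose, Matrix.conjTranspose_submatrix,
      Matrix.star_eq_conjTranspose]
  rw [h, ← Matrix.submatrix_mul _ _ _ _ _ Function.bijective_id, unit_star_mul hk,
    Matrix.submatrix_one_equiv]

lemma perm_diag {d : ℕ} (a b : Mt d) (s : Fin d → ℝ) (e : Fin d ≃ Fin d) :
    a.submatrix id e * Matrix.diagonal (fun i => s (e i)) * b.submatrix e id =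
      a * Matrix.diagonal s * b := by
  have h : (Matrix.diagonal (fun i => s (e i)) : Mt d) = (Matrix.diagonal s).submatrix e e := by
    rw [Matrix.submatrix_diagonal_equiv]; rfl
  rw [h, Matrix.submatrix_mul_equiv, Matrix.submatrix_mul_equiv, Matrix.submatrix_id_id]

lemma exists_svd {d : ℕ} (A : Mt d) (hA : A.det ≠ 0) : ∃ k l s, IsSVD A k l s := by
  have hH : (Aᴴ * A).IsHermitian := Matrix.isHermitian_conjTranspose_mul_self A
  have hdet : (Aᴴ * A).det ≠ 0 := by
    rw [Matrix.det_mul, Matrix.det_conjTranspose]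
    simpa using hA
  have hpos : ∀ i, 0 < hH.eigenvalues i := by
    intro i
    have h0 := Matrix.eigenvalues_conjTranspose_mul_self_nonneg A i
    refine lt_of_le_of_ne h0 (fun h => hdet ?_)
    rw [hH.det_eq_prod_eigenvalues]
    exact Finset.prod_eq_zero (Finset.mem_univ i) (by simpa using h.symm)
  set lam := hH.eigenvalues with hlam
  set U : Mt d := (hH.eigenvectorUnitary : Mt d) with hU
  have hUm : U ∈ Matrix.unitaryGroup (Fin d) ℝ := hH.eigenvectorUnitary.2
  have hspec : Aᴴ * A = U * Matrix.diagonal lam * star U := by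
    have := hH.spectral_theorem
    rw [Unitary.conjStarAlgAut_apply] at this
    exact this
  let e : Fin d ≃ Fin d := Tuple.sort (fun i => - lam i)
  have hmono := Tuple.monotone_sort (fun i => - lam i)
  let V : Mt d := U.submatrix id e
  have hV : V ∈ Matrix.unitaryGroup (Fin d) ℝ := perm_unit hUm e
  have hVs : star V = (star U).submatrix e id := by
    rw [Matrix.star_eq_conjTranspose, Matrix.conjTranspose_submatrix,
      Matrix.star_eq_conjTranspose]
  have hspec2 : Aᴴ * A = V * Matrix.diagonal (fun i => lam (e i)) * star V := by
    rw [hVs, hspec]; exact (perm_diag _ _ _ _).symm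
  let s : Fin d → ℝ := fun i => Real.sqrt (lam (e i))
  have hs : ∀ i, 0 < s i := fun i => Real.sqrt_pos.2 (hpos _)
  let E : Mt d := Matrix.diagonal (fun i => (s i)⁻¹)
  have hEs : E * Matrix.diagonal s = 1 := by
    rw [Matrix.diagonal_mul_diagonal, ← Matrix.diagonal_one]
    congr 1; ext i; exact inv_mul_cancel₀ (hs i).ne'
  have hEst : star E = E := by
    simp [E, Matrix.star_eq_conjTranspose]
  have hEE : E * Matrix.diagonal (fun i => lam (e i)) * E = 1 := by
    rw [Matrix.diagonal_mul_diagonal, Matrix.diagonal_mul_diagonal, ← Matrix.diagonal_one]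
    congr 1; ext i
    have : s i * s i = lam (e i) := Real.mul_self_sqrt (hpos _).le
    rw [← this]
    have := (hs i).ne'
    field_simp
  refine ⟨A * V * E, star V, s, ?_, unit_star_mem hV, ?_, fun i => (hs i).le, ?_⟩
  · rw [Matrix.mem_unitaryGroup_iff']
    rw [star_mul, star_mul, hEst, Matrix.star_eq_conjTranspose A]
    calc _ = E * star V * (Aᴴ * A) * V * E := by noncomm_ring
      _ = E * (star V * V) * Matrix.diagonal (fun i => lam (e i)) * (star V * V) * E := by
        rw [hspec2]; noncomm_ring
      _ = 1 := by rw [unit_star_mul hV, mul_one, mul_one, hEE]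
  · intro i j hij
    apply Real.sqrt_le_sqrt
    have := hmono hij
    simpa [e] using this
  · calc A = A * (V * star V) := by rw [unit_mul_star hV, mul_one]
      _ = A * V * (E * Matrix.diagonal s) * star V := by rw [hEs]; noncomm_ring
      _ = _ := by noncomm_ring

lemma svd_pos {d : ℕ} {A k l : Mt d} {s : Fin d → ℝ} (h : IsSVD A k l s) (hA : A.det ≠ 0)
    (i : Fin d) : 0 < s i := by
  refine lt_of_le_of_ne (h.nonneg i) (fun h0 => hA ?_)
  rw [h.eq, Matrix.det_mul, Matrix.det_mul, Matrix.det_diagonal,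
    Finset.prod_eq_zero (Finset.mem_univ i) h0.symm]
  ring

lemma svd_inv {d : ℕ} {A k l B : Mt d} {s : Fin d → ℝ} (h : IsSVD A k l s) (hA : A.det ≠ 0)
    (hB : A * B = 1) :
    IsSVD B ((star l).submatrix id Fin.revPerm) ((star k).submatrix Fin.revPerm id)
      (fun i => (s (Fin.rev i))⁻¹) := by
  have hpos := svd_pos h hA
  have hBeq : B = star l * Matrix.diagonal (fun i => (s i)⁻¹) * star k := by
    have hAi : (star l * Matrix.diagonal (fun i => (s i)⁻¹) * star k) * A = 1 := by
      rw [h.eq]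
      calc _ = star l * (Matrix.diagonal (fun i => (s i)⁻¹) * (star k * k) *
            Matrix.diagonal s) * l := by noncomm_ring
        _ = star l * l := by
          rw [unit_star_mul h.hk, mul_one, Matrix.diagonal_mul_diagonal]
          have : (fun i => (s i)⁻¹ * s i) = fun _ => 1 := by
            ext i; exact inv_mul_cancel₀ (hpos i).ne'
          rw [this, Matrix.diagonal_one, mul_one]
        _ = 1 := unit_star_mul h.hl
    calc B = ((star l * Matrix.diagonal (fun i => (s i)⁻¹) * star k) * A) * B := by
          rw [hAi, one_mul]
      _ = _ := by rw [mul_assoc, hB, mul_one]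
  refine ⟨perm_unit (unit_star_mem h.hl) _, ?_, ?_, fun i => inv_nonneg.2 (h.nonneg _), ?_⟩
  · have h2 : (star k).submatrix Fin.revPerm id = star (k.submatrix id Fin.revPerm) := by
      rw [Matrix.star_eq_conjTranspose, Matrix.star_eq_conjTranspose,
        Matrix.conjTranspose_submatrix]
    rw [h2]
    exact unit_star_mem (perm_unit h.hk _)
  · intro i j hij
    exact inv_anti₀ (hpos _) (h.anti _ _ (Fin.rev_le_rev.2 hij))
  · rw [hBeq]
    exact (perm_diag _ _ (fun i => (s i)⁻¹) Fin.revPerm).symm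

lemma attr_prop {d : ℕ} {A : Mt d} (hA : A.det ≠ 0) {q : ℕ} (hq1 : 1 ≤ q) (hq : q ≤ d)
    {U : Submodule ℝ (Euc d)} (hU : IsCartanAttractor A q U) :
    (∀ u ∈ U, ∀ x, act A x = u → sv A q * ‖x‖ ≤ ‖u‖) ∧ ∃ u ∈ U, u ≠ 0 := by
  obtain ⟨k, l, s, hk, hl, hanti, hnn, heq, rfl⟩ := hU
  have h : IsSVD A k l s := ⟨hk, hl, hanti, hnn, heq⟩
  have hcol : ∀ i : Fin d, (EuclideanSpace.equiv (Fin d) ℝ).symm (fun j => k j i) =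
      act k (EuclideanSpace.single i 1) := by
    intro i; ext j
    rw [act_apply]
    simp
  constructor
  · intro u hu x hx
    have hle : Submodule.span ℝ { x : Euc d | ∃ i : Fin d, (i : ℕ) < q ∧
          x = (EuclideanSpace.equiv (Fin d) ℝ).symm (fun j => k j i) } ≤ firstR (star k) q := by
      rw [Submodule.span_le]
      rintro _ ⟨i, hi, rfl⟩ j hj
      rw [hcol, act_star_act hk, PiLp.single_apply, if_neg]
      rintro rfl; omega
    have h1 := hle hu
    have hsx : act (Matrix.diagonal s) (act l x) = act (star k) u := by
      rw [← hx, h.eq, act_mul, act_mul, act_star_act hk]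
    have h2 := norm_diag_ge h ⟨q - 1, by omega⟩ (act l x) (by
      intro j hj
      rw [Fin.lt_def] at hj
      have h3 := h1 j (by simp at hj; omega)
      rw [← hsx, act_diag] at h3
      exact (mul_eq_zero.1 h3).resolve_left (svd_pos h hA j).ne')
    rw [hsx, norm_act_unit (unit_star_mem hk), norm_act_unit hl] at h2
    have h4 := sv_eq h (q - 1) (by omega)
    rw [Nat.sub_add_cancel hq1] at h4
    rwa [h4]
  · refine ⟨_, Submodule.subset_span ⟨⟨0, by omega⟩, hq1, rfl⟩, ?_⟩
    rw [hcol, ← norm_ne_zero_iff, norm_act_unit hk]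
    simp

lemma cartan_spec {d : ℕ} {A : Mt d} (hA : A.det ≠ 0) (q : ℕ) :
    IsCartanAttractor A q (cartanAttractor A q) := by
  have h : ∃ U, IsCartanAttractor A q U := by
    obtain ⟨k, l, s, h⟩ := exists_svd A hA
    exact ⟨_, k, l, s, h.hk, h.hl, h.anti, h.nonneg, h.eq, rfl⟩
  unfold cartanAttractor
  rw [dif_pos h]
  exact h.choose_spec

lemma JpJp' (d p : ℕ) (X : Mt d) : Jp d p * (Jp d p * X) = Jp d p * X := by
  rw [← mul_assoc, Jp_mul_Jp]

lemma JqJq' (d p : ℕ) (X : Mt d) : Jq d p * (Jq d p * X) = Jq d p * X := by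
  rw [← mul_assoc, Jq_mul_Jq]

lemma JpJq' (d p : ℕ) (X : Mt d) : Jp d p * (Jq d p * X) = 0 := by
  rw [← mul_assoc, Jp_mul_Jq, zero_mul]

lemma JqJp' (d p : ℕ) (X : Mt d) : Jq d p * (Jp d p * X) = 0 := by
  rw [← mul_assoc, Jq_mul_Jp, zero_mul]

lemma Jp_comm' (d p : ℕ) (s : Fin d → ℝ) (X : Mt d) :
    Jp d p * (Matrix.diagonal s * X) = Matrix.diagonal s * (Jp d p * X) := by
  rw [← mul_assoc, Jp_comm, mul_assoc]

/-- the upper left `p × p` corner, padded by the identity -/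
def cor {d : ℕ} (p : ℕ) (X : Mt d) : Mt d := Jp d p * X * Jp d p + Jq d p

lemma cor_mul {d : ℕ} (p : ℕ) (X Y : Mt d) : cor p X * cor p Y = cor p (X * Jp d p * Y) := by
  simp only [cor, mul_add, add_mul, mul_assoc, JpJp', JqJp', Jp_mul_Jq, Jq_mul_Jq,
    mul_zero, zero_add, add_zero]

lemma cor_diag_mul {d : ℕ} (p : ℕ) (s : Fin d → ℝ) (Y : Mt d) :
    cor p (Matrix.diagonal s * Y) = cor p (Matrix.diagonal s) * cor p Y := by
  rw [cor_mul, cor, cor]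
  simp only [mul_assoc, Jp_comm', JpJp']

lemma cor_mul_diag {d : ℕ} (p : ℕ) (s : Fin d → ℝ) (Y : Mt d) :
    cor p (Y * Matrix.diagonal s) = cor p Y * cor p (Matrix.diagonal s) := by
  rw [cor_mul, cor, cor]
  simp only [JpJp', mul_assoc, ← Jp_comm]

/-- product of the first `p` entries -/
def pr {d : ℕ} (p : ℕ) (s : Fin d → ℝ) : ℝ := ∏ i : Fin d, if (i : ℕ) < p then s i else 1

lemma cor_diag {d : ℕ} (p : ℕ) (s : Fin d → ℝ) :
    cor p (Matrix.diagonal s) = Matrix.diagonal (fun i : Fin d => if (i : ℕ) < p then s i else 1) := by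
  rw [cor, Jp, Jq, Matrix.diagonal_mul_diagonal, Matrix.diagonal_mul_diagonal,
    Matrix.diagonal_add]
  congr 1; ext i; split_ifs <;> simp

lemma det_cor_diag {d : ℕ} (p : ℕ) (s : Fin d → ℝ) :
    (cor p (Matrix.diagonal s)).det = pr p s := by
  rw [cor_diag, Matrix.det_diagonal, pr]

lemma star_cor {d : ℕ} (p : ℕ) (X : Mt d) : star (cor p X) = cor p (star X) := by
  rw [cor, cor, star_add, star_mul, star_mul, star_Jp, star_Jq, mul_assoc]

lemma cor_star_mul {d : ℕ} (p : ℕ) {X : Mt d} (hX : star X * X = 1) :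
    star (cor p X) * cor p X - 1 = - (star (Jq d p * X * Jp d p) * (Jq d p * X * Jp d p)) := by
  rw [star_cor, cor_mul, cor, star_mul, star_mul, star_Jp, star_Jq]
  have h1 : Jp d p * (star X * Jp d p * X) * Jp d p + Jp d p * (star X * Jq d p * X) * Jp d p
      = Jp d p := by
    calc _ = Jp d p * (star X * (Jp d p + Jq d p) * X) * Jp d p := by noncomm_ring
      _ = Jp d p := by rw [Jp_add_Jq, mul_one, hX, mul_one, Jp_mul_Jp]
  have h2 : Jp d p * (star X * Jq d p) * (Jq d p * X * Jp d p) =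
      Jp d p * (star X * Jq d p * X) * Jp d p := by
    simp only [mul_assoc, JqJq']
  have h3 : Jp d p * (star X * Jp d p * X) * Jp d p =
      Jp d p - Jp d p * (star X * Jq d p * X) * Jp d p := eq_sub_of_add_eq h1
  have h4 : (1 : Mt d) = Jp d p + Jq d p := (Jp_add_Jq d p).symm
  rw [h2, h3, h4]; abel

lemma norm_cor_le {d : ℕ} (p : ℕ) {X : Mt d} (hX : ‖X‖ ≤ 1) : ‖cor p X‖ ≤ 2 := by
  have h1 := norm_mul3_le _ _ _ (norm_Jp_le d p) hX (norm_Jp_le d p)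
  have h2 := norm_Jq_le d p
  have := norm_add_le (Jp d p * X * Jp d p) (Jq d p)
  rw [cor]; linarith

lemma entry_le {d : ℕ} (Z : Mt d) (i j : Fin d) : |Z i j| ≤ ‖Z‖ := by
  have h1 : act Z (EuclideanSpace.single j 1) i = Z i j := by
    rw [act_apply]; simp
  have h2 := norm_act_le Z (EuclideanSpace.single j 1)
  have h3 := PiLp.norm_apply_le (act Z (EuclideanSpace.single j 1)) i
  rw [h1] at h3
  simp only [PiLp.norm_single, norm_one, mul_one, Real.norm_eq_abs] at h2 h3
  linarith

/-- determinant bound constant -/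
def KD (d : ℕ) : ℝ := (d.factorial : ℝ) * 4 ^ d

lemma KD_pos (d : ℕ) : 0 < KD d := by unfold KD; positivity

lemma det_le_KD {d : ℕ} (Z : Mt d) (h : ∀ i j, |Z i j| ≤ 4) : |Z.det| ≤ KD d := by
  have := Matrix.det_le (A := Z) (abv := AbsoluteValue.abs) (x := (4 : ℝ)) h
  simpa [KD, nsmul_eq_mul] using this

lemma norm_le_sum {d : ℕ} (v : Euc d) : ‖v‖ ≤ ∑ i, |v i| := by
  have h : v = ∑ i, v i • EuclideanSpace.single i (1 : ℝ) := by
    ext j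
    simp [Pi.single_apply]
  conv_lhs => rw [h]
  refine (norm_sum_le _ _).trans (le_of_eq ?_)
  simp [norm_smul]

lemma adj_bound {d : ℕ} (Z : Mt d) (hZ : ‖Z‖ ≤ 2) (e : Euc d) :
    |Z.det| * ‖e‖ ≤ d * (d * KD d) * ‖act Z e‖ := by
  have hadj : ∀ i j, |Z.adjugate i j| ≤ KD d := by
    intro i j
    rw [Matrix.adjugate_apply]
    apply det_le_KD
    intro a b
    rw [Matrix.updateRow_apply]
    split_ifs
    · rw [Pi.single_apply]; split_ifs <;> norm_num
    · exact (entry_le Z a b).trans (by linarith)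
  have h1 : act Z.adjugate (act Z e) = Z.det • e := by
    rw [← act_mul, Matrix.adjugate_mul]
    simp [act]
  have h2 : ∀ i, |Z.det| * |e i| ≤ d * KD d * ‖act Z e‖ := by
    intro i
    have h3 : Z.det * e i = ∑ j, Z.adjugate i j * act Z e j := by
      rw [← act_apply, h1]; simp
    rw [← abs_mul, h3]
    calc |∑ j, Z.adjugate i j * act Z e j| ≤ ∑ j, |Z.adjugate i j * act Z e j| :=
          Finset.abs_sum_le_sum_abs _ _
      _ ≤ ∑ j : Fin d, KD d * ‖act Z e‖ := by
          apply Finset.sum_le_sum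
          intro j _
          rw [abs_mul]
          have := PiLp.norm_apply_le (act Z e) j
          rw [Real.norm_eq_abs] at this
          have := hadj i j
          have := KD_pos d
          gcongr
      _ = _ := by simp; ring
  calc |Z.det| * ‖e‖ ≤ |Z.det| * ∑ i, |e i| := by
        gcongr; exact norm_le_sum e
    _ = ∑ i, |Z.det| * |e i| := by rw [Finset.mul_sum]
    _ ≤ ∑ i : Fin d, d * KD d * ‖act Z e‖ := Finset.sum_le_sum (fun i _ => h2 i)
    _ = _ := by simp; ring

lemma det_lower {d : ℕ} (W Z : Mt d) (hW : ‖W‖ ≤ 2) (h : ‖W * Z - 1‖ ≤ 1 / 2) :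
    ∃ Zi : Mt d, Z * Zi = 1 ∧ Zi * Z = 1 ∧ ‖Zi‖ ≤ 4 ∧ (KD d)⁻¹ ≤ |Z.det| := by
  have hv : ∀ v, ‖v‖ ≤ 4 * ‖act Z v‖ := by
    intro v
    have h1 : v = act W (act Z v) - act (W * Z - 1) v := by
      rw [sub_act, act_one, act_mul]; abel
    have h2 := norm_sub_le (act W (act Z v)) (act (W * Z - 1) v)
    rw [← h1] at h2
    have h3 := norm_act_le W (act Z v)
    have h4 := norm_act_le (W * Z - 1) v
    have h5 := norm_nonneg v
    have h6 := norm_nonneg (act Z v)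
    nlinarith
  have hdet : Z.det ≠ 0 := by
    intro h0
    obtain ⟨v, hv0, hv1⟩ := Matrix.exists_mulVec_eq_zero_iff.2 h0
    have := hv (WithLp.toLp 2 v)
    have h2 : act Z (WithLp.toLp 2 v) = 0 := by
      ext i
      simp [act, hv1]
    rw [h2, norm_zero, mul_zero] at this
    have h3 : WithLp.toLp 2 v = 0 := norm_le_zero_iff.1 this
    apply hv0
    simpa using h3
  have hu : IsUnit Z.det := isUnit_iff_ne_zero.2 hdet
  have e1 : Z * Z⁻¹ = 1 := Matrix.mul_nonsing_inv Z hu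
  have hn : ‖Z⁻¹‖ ≤ 4 := by
    rw [Matrix.cstar_norm_def]
    refine ContinuousLinearMap.opNorm_le_bound _ (by norm_num) (fun w => ?_)
    have := hv (act Z⁻¹ w)
    rw [← act_mul, e1, act_one] at this
    exact this
  refine ⟨Z⁻¹, e1, Matrix.nonsing_inv_mul Z hu, hn, ?_⟩
  have h3 : |Z⁻¹.det| ≤ KD d := det_le_KD _ (fun i j => (entry_le _ i j).trans hn)
  have h4 : |Z.det| * |Z⁻¹.det| = 1 := by
    rw [← abs_mul, ← Matrix.det_mul, e1]; simp
  have h5 := KD_pos d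
  rw [inv_le_iff_one_le_mul₀ h5, ← h4]
  gcongr

lemma unit_mul_mem {d : ℕ} {k l : Mt d} (hk : k ∈ Matrix.unitaryGroup (Fin d) ℝ)
    (hl : l ∈ Matrix.unitaryGroup (Fin d) ℝ) : k * l ∈ Matrix.unitaryGroup (Fin d) ℝ :=
  mul_mem hk hl

lemma volume_mul {d p : ℕ} {A kA lA B kB lB G kG lG : Mt d} {sA sB sG : Fin d → ℝ}
    (hA : IsSVD A kA lA sA) (hB : IsSVD B kB lB sB) (hG : IsSVD G kG lG sG) (hBA : G = B * A)
    (hp : p < d) (hp1 : 1 ≤ p) (hpos : 0 < sG ⟨p - 1, by omega⟩)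
    (hX : ‖Jq d p * (star kB * kG) * Jp d p‖ ≤ 1 / 4)
    (hY : ‖Jp d p * (lA * star lG) * Jq d p‖ ≤ 1 / 4)
    (hgap : sG ⟨p, hp⟩ ≤ (1 / 64) * sG ⟨p - 1, by omega⟩) :
    (KD d)⁻¹ * (KD d)⁻¹ * |pr p sG| ≤ |pr p sA| * |pr p sB| * |(cor p (lB * kA)).det| := by
  set X := star kB * kG with hXd
  set Y := lG * star lA with hYd
  have hXu : X ∈ Matrix.unitaryGroup (Fin d) ℝ := unit_mul_mem (unit_star_mem hB.hk) hG.hk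
  have hYu : Y ∈ Matrix.unitaryGroup (Fin d) ℝ := unit_mul_mem hG.hl (unit_star_mem hA.hl)
  have hY' : ‖Jq d p * Y * Jp d p‖ ≤ 1 / 4 := by
    rw [← norm_star, star_mul, star_mul, star_Jp, star_Jq, hYd, star_mul, star_star, ← mul_assoc]
    exact hY
  have e0 : X * Matrix.diagonal sG * Y =
      Matrix.diagonal sB * (lB * kA) * Matrix.diagonal sA := by
    calc _ = star kB * (kG * Matrix.diagonal sG * lG) * star lA := by
          rw [hXd, hYd]; noncomm_ring
      _ = (star kB * kB) * Matrix.diagonal sB * lB * kA * Matrix.diagonal sA * (lA * star lA) := by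
          rw [← hG.eq, hBA, hB.eq, hA.eq]; noncomm_ring
      _ = _ := by rw [unit_star_mul hB.hk, unit_mul_star hA.hl]; noncomm_ring
  have e1 : cor p (X * Matrix.diagonal sG * Y) =
      cor p (Matrix.diagonal sB) * cor p (lB * kA) * cor p (Matrix.diagonal sA) := by
    rw [e0, cor_mul_diag, cor_diag_mul]
  set E := (Jp d p * X) * (Jq d p * Matrix.diagonal sG) * (Jq d p * Y * Jp d p) with hE
  have e2 : cor p (X * Matrix.diagonal sG * Y) =
      cor p X * cor p (Matrix.diagonal sG) * cor p Y + E := by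
    rw [← cor_mul_diag, cor_mul]
    have h1 : Matrix.diagonal sG = Matrix.diagonal sG * Jp d p + Matrix.diagonal sG * Jq d p := by
      rw [← mul_add, Jp_add_Jq, mul_one]
    have h2 : Jq d p * Matrix.diagonal sG * Jq d p = Matrix.diagonal sG * Jq d p := by
      rw [Jq_comm, mul_assoc, Jq_mul_Jq]
    have h3 : E = Jp d p * X * (Matrix.diagonal sG * Jq d p) * Y * Jp d p := by
      rw [← h2, hE]; noncomm_ring
    rw [h3, cor, cor]
    conv_lhs => rw [h1]
    noncomm_ring
  have hXc : ‖star (cor p X) * cor p X - 1‖ ≤ 1 / 2 := by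
    rw [cor_star_mul p (unit_star_mul hXu), norm_neg, CStarRing.norm_star_mul_self]
    nlinarith [norm_nonneg (Jq d p * X * Jp d p)]
  have hXn : ‖star (cor p X)‖ ≤ 2 := by rw [norm_star]; exact norm_cor_le p (norm_unit_le hXu)
  have hYn : ‖star (cor p Y)‖ ≤ 2 := by rw [norm_star]; exact norm_cor_le p (norm_unit_le hYu)
  obtain ⟨Xi, hXi1, hXi2, hXi3, hXi4⟩ := det_lower _ _ hXn hXc
  have hcomm : Xi * Jp d p = Jp d p * Xi := by
    have h1 : cor p X * Jp d p = Jp d p * cor p X := by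
      simp only [cor, mul_add, add_mul, mul_assoc, Jp_mul_Jp, JpJp', Jq_mul_Jp, Jp_mul_Jq]
    calc Xi * Jp d p = Xi * (Jp d p * cor p X) * Xi := by
          rw [mul_assoc, mul_assoc, hXi1, mul_one]
      _ = _ := by rw [← h1, ← mul_assoc, hXi2, one_mul]
  set H := Ep d p sG * Xi * E with hH
  have hJE : Jp d p * E = E := by rw [hE]; simp only [mul_assoc, JpJp']
  have hEp : cor p (Matrix.diagonal sG) * Ep d p sG = Jp d p := by
    rw [← diag_mul_Ep hG (by omega) hp1 hpos, cor_diag, Ep, Matrix.diagonal_mul_diagonal,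
      Matrix.diagonal_mul_diagonal]
    congr 1; ext i; split_ifs <;> simp
  have e3 : cor p X * cor p (Matrix.diagonal sG) * H = E := by
    calc _ = cor p X * (cor p (Matrix.diagonal sG) * Ep d p sG) * Xi * E := by
          rw [hH]; noncomm_ring
      _ = cor p X * (Jp d p * Xi) * E := by rw [hEp]; noncomm_ring
      _ = (cor p X * Xi) * (Jp d p * E) := by rw [← hcomm]; noncomm_ring
      _ = E := by rw [hXi1, hJE, one_mul]
  have hEn : ‖E‖ ≤ sG ⟨p, hp⟩ * (1 / 4) := by
    have h1 : ‖Jp d p * X‖ ≤ 1 := by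
      have := norm_mul_le (Jp d p) X
      nlinarith [norm_Jp_le d p, norm_unit_le hXu, norm_nonneg X, norm_nonneg (Jp d p)]
    simpa using norm_mul3_le _ _ _ h1 (norm_Jq_diag hG hp) hY'
  have hHn : ‖H‖ ≤ 1 / 8 := by
    have h1 := norm_mul3_le _ _ _ (norm_Ep_le hG _ hp1 hpos) hXi3 hEn
    refine h1.trans ?_
    rw [inv_mul_eq_div, div_mul_eq_mul_div, div_le_iff₀ hpos]
    nlinarith
  have hZ : ‖star (cor p Y) * (cor p Y + H) - 1‖ ≤ 1 / 2 := by
    have h1 : star (cor p Y) * (cor p Y + H) - 1 =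
        (star (cor p Y) * cor p Y - 1) + star (cor p Y) * H := by noncomm_ring
    have h2 : ‖star (cor p Y) * cor p Y - 1‖ ≤ 1 / 16 := by
      rw [cor_star_mul p (unit_star_mul hYu), norm_neg, CStarRing.norm_star_mul_self]
      nlinarith [norm_nonneg (Jq d p * Y * Jp d p)]
    have h3 : ‖star (cor p Y) * H‖ ≤ 1 / 4 := by
      have := norm_mul_le (star (cor p Y)) H
      nlinarith [norm_nonneg H]
    rw [h1]
    exact (norm_add_le _ _).trans (by linarith)
  obtain ⟨_, _, _, _, hZ4⟩ := det_lower _ _ hYn hZ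
  have e4 : cor p X * cor p (Matrix.diagonal sG) * (cor p Y + H) =
      cor p (Matrix.diagonal sB) * cor p (lB * kA) * cor p (Matrix.diagonal sA) := by
    rw [mul_add, e3, ← e2, e1]
  have e5 := congrArg (fun M => |Matrix.det M|) e4
  simp only [Matrix.det_mul, abs_mul, det_cor_diag] at e5
  have hK := KD_pos d
  calc (KD d)⁻¹ * (KD d)⁻¹ * |pr p sG| ≤ |(cor p X).det| * |(cor p Y + H).det| * |pr p sG| := by
        gcongr
    _ = |(cor p X).det| * |pr p sG| * |(cor p Y + H).det| := by ring
    _ = _ := by rw [e5]; ring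

/-- A dominated system of products on the interval `[n, m]`. -/
structure Sys {d p : ℕ} (hp : p < d) (Λ μ c : ℝ) (n m : ℤ) (P Q k l : ℤ → ℤ → Mt d)
    (s : ℤ → ℤ → Fin d → ℝ) : Prop where
  hp1 : 1 ≤ p
  hΛ : 0 ≤ Λ
  hμ : 0 < μ
  hc : 0 < c
  svd : ∀ a b, IsSVD (P a b) (k a b) (l a b) (s a b)
  pos : ∀ a b i, 0 < s a b i
  PQ : ∀ a b, P a b * Q a b = 1
  QP : ∀ a b, Q a b * P a b = 1
  mul : ∀ a b e, a ≤ b → b ≤ e → P a e = P b e * P a b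
  bP : ∀ a b, n ≤ a → a ≤ b → b ≤ m → ‖P a b‖ ≤ Real.exp (Λ * ((b : ℝ) - a))
  bQ : ∀ a b, n ≤ a → a ≤ b → b ≤ m → ‖Q a b‖ ≤ Real.exp (Λ * ((b : ℝ) - a))
  gap : ∀ a b, n ≤ a → a < b → b ≤ m →
    s a b ⟨p, hp⟩ ≤ c * Real.exp (-μ * ((b : ℝ) - a)) * s a b ⟨p - 1, by omega⟩

/-- chaining constant -/
def K1 (Λ μ c : ℝ) : ℝ := c * Real.exp (2 * Λ) / (1 - Real.exp (-μ))

lemma K1_pos {Λ μ c : ℝ} (hμ : 0 < μ) (hc : 0 < c) : 0 < K1 Λ μ c := by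
  have : Real.exp (-μ) < 1 := Real.exp_lt_one_iff.2 (by linarith)
  have : 0 < 1 - Real.exp (-μ) := by linarith
  unfold K1; positivity

lemma K1_step {Λ μ c : ℝ} (hμ : 0 < μ) (x : ℝ) :
    K1 Λ μ c * (Real.exp (-μ * x) - Real.exp (-μ * (x + 1))) =
      c * Real.exp (2 * Λ) * Real.exp (-μ * x) := by
  have : Real.exp (-μ) < 1 := Real.exp_lt_one_iff.2 (by linarith)
  have h0 : 1 - Real.exp (-μ) ≠ 0 := by linarith
  have : Real.exp (-μ * (x + 1)) = Real.exp (-μ * x) * Real.exp (-μ) := by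
    rw [← Real.exp_add]; ring_nf
  rw [this, K1]
  field_simp

lemma triU {d p : ℕ} {X Y : Mt d} (hX : ‖X‖ ≤ 1) (hY : ‖Y‖ ≤ 1) :
    ‖Jq d p * (X * Y) * Jp d p‖ ≤ ‖Jq d p * X * Jp d p‖ + ‖Jq d p * Y * Jp d p‖ := by
  have e : Jq d p * (X * Y) * Jp d p = (Jq d p * X * Jp d p) * Y * Jp d p +
      Jq d p * X * (Jq d p * Y * Jp d p) := by
    calc _ = Jq d p * (X * 1 * Y) * Jp d p := by rw [mul_one]
      _ = _ := by rw [← Jp_add_Jq d p]; noncomm_ring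
  rw [e]
  refine (norm_add_le _ _).trans ?_
  have h1 := norm_mul3_le _ _ _ (le_refl ‖Jq d p * X * Jp d p‖) hY (norm_Jp_le d p)
  have h2 := norm_mul3_le _ _ _ (norm_Jq_le d p) hX (le_refl ‖Jq d p * Y * Jp d p‖)
  simp only [mul_one, one_mul] at h1 h2
  linarith

lemma triR {d p : ℕ} {X Y : Mt d} (hX : ‖X‖ ≤ 1) (hY : ‖Y‖ ≤ 1) :
    ‖Jp d p * (X * Y) * Jq d p‖ ≤ ‖Jp d p * X * Jq d p‖ + ‖Jp d p * Y * Jq d p‖ := by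
  have e : Jp d p * (X * Y) * Jq d p = (Jp d p * X * Jq d p) * Y * Jq d p +
      Jp d p * X * (Jp d p * Y * Jq d p) := by
    calc _ = Jp d p * (X * 1 * Y) * Jq d p := by rw [mul_one]
      _ = _ := by rw [← Jp_add_Jq d p]; noncomm_ring
  rw [e]
  refine (norm_add_le _ _).trans ?_
  have h1 := norm_mul3_le _ _ _ (le_refl ‖Jp d p * X * Jq d p‖) hY (norm_Jq_le d p)
  have h2 := norm_mul3_le _ _ _ (norm_Jp_le d p) hX (le_refl ‖Jp d p * Y * Jq d p‖)
  simp only [mul_one, one_mul] at h1 h2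
  linarith

section
variable {d p : ℕ} {hp : p < d} {Λ μ c : ℝ} {n m : ℤ} {P Q k l : ℤ → ℤ → Mt d}
    {s : ℤ → ℤ → Fin d → ℝ}

/-- singular values grow at most by the norm on the left -/
lemma Sys.left_le (S : Sys hp Λ μ c n m P Q k l s) {a b e : ℤ} (ha : n ≤ a) (hab : a ≤ b)
    (hbe : b ≤ e) (he : e ≤ m) (i : Fin d) :
    s a e i ≤ Real.exp (Λ * ((e : ℝ) - b)) * s a b i := by
  have h := svd_le (D := P b e) (D' := 1) (S.svd a b) (S.svd a e)
    (by rw [mul_one]; exact S.mul a b e hab hbe) i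
  have h1 := S.bP b e (by omega) hbe he
  have h2 := norm_one_le (d := d)
  have h3 := (S.pos a b i).le
  calc _ ≤ _ := h
    _ ≤ Real.exp (Λ * ((e : ℝ) - b)) * s a b i * 1 := by gcongr
    _ = _ := mul_one _

lemma Sys.right_le (S : Sys hp Λ μ c n m P Q k l s) {a b e : ℤ} (ha : n ≤ a) (hab : a ≤ b)
    (hbe : b ≤ e) (he : e ≤ m) (i : Fin d) :
    s a e i ≤ Real.exp (Λ * ((b : ℝ) - a)) * s b e i := by
  have h := svd_le (D := 1) (D' := P a b) (S.svd b e) (S.svd a e)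
    (by rw [one_mul]; exact S.mul a b e hab hbe) i
  have h1 := S.bP a b (by omega) hab (by omega)
  have h2 := norm_one_le (d := d)
  have h3 := (S.pos b e i).le
  calc _ ≤ _ := h
    _ ≤ 1 * s b e i * Real.exp (Λ * ((b : ℝ) - a)) := by gcongr
    _ = _ := by ring

lemma Sys.right_ge (S : Sys hp Λ μ c n m P Q k l s) {a b e : ℤ} (ha : n ≤ a) (hab : a ≤ b)
    (hbe : b ≤ e) (he : e ≤ m) (i : Fin d) :
    s b e i ≤ Real.exp (Λ * ((b : ℝ) - a)) * s a e i := by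
  have h := svd_le (D := 1) (D' := Q a b) (S.svd a e) (S.svd b e)
    (by rw [one_mul, S.mul a b e hab hbe, mul_assoc, S.PQ, mul_one]) i
  have h1 := S.bQ a b (by omega) hab (by omega)
  have h2 := norm_one_le (d := d)
  have h3 := (S.pos a e i).le
  calc _ ≤ _ := h
    _ ≤ 1 * s a e i * Real.exp (Λ * ((b : ℝ) - a)) := by gcongr
    _ = _ := by ring

lemma Sys.chainU_aux (S : Sys hp Λ μ c n m P Q k l s) {a b : ℤ} (hab : a < b) (hb : b ≤ m)
    (j : ℕ) : n ≤ a - j → ‖Jq d p * (star (k a b) * k (a - j) b) * Jp d p‖ ≤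
      K1 Λ μ c * (Real.exp (-μ * ((b : ℝ) - a)) - Real.exp (-μ * ((b : ℝ) - a + j))) := by
  induction j with
  | zero =>
    intro _
    simp [unit_star_mul (S.svd a b).hk, Jq_mul_Jp]
  | succ j ih =>
    intro hn
    have hn' : n ≤ a - j := by push_cast at hn; omega
    have h1 := ih hn'
    set a1 := a - (j : ℤ) with ha1
    have ha2 : a - ((j + 1 : ℕ) : ℤ) = a1 - 1 := by push_cast; omega
    rw [ha2] at hn ⊢
    have hp1 := S.hp1
    have h2 := cmp_U (S.svd a1 b) (S.svd (a1 - 1) b) hp S.hp1 (S.pos _ _ _)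
      (D := P (a1 - 1) a1) (S.mul (a1 - 1) a1 b (by omega) (by omega))
    have h3 := S.bP (a1 - 1) a1 hn (by omega) (by omega)
    have h4 := S.right_ge (a := a1 - 1) (b := a1) (e := b) hn (by omega) (by omega) hb
      ⟨p - 1, by omega⟩
    have h5 := S.gap a1 b hn' (by omega) hb
    have e1 : ((a1 : ℤ) : ℝ) - ((a1 - 1 : ℤ) : ℝ) = 1 := by push_cast; ring
    have e2 : (b : ℝ) - (a1 : ℝ) = (b : ℝ) - a + j := by rw [ha1]; push_cast; ring
    rw [e1, mul_one] at h3 h4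
    rw [e2] at h5
    have hs := S.pos (a1 - 1) b ⟨p - 1, by omega⟩
    have hs1 := S.pos a1 b ⟨p - 1, by omega⟩
    have hs2 := S.pos a1 b ⟨p, hp⟩
    have hc := S.hc
    have h6 : ‖Jq d p * (star (k a1 b) * k (a1 - 1) b) * Jp d p‖ ≤
        c * Real.exp (2 * Λ) * Real.exp (-μ * ((b : ℝ) - a + j)) := by
      refine h2.trans ?_
      rw [mul_inv_le_iff₀ hs]
      calc _ ≤ (c * Real.exp (-μ * ((b : ℝ) - a + j)) * s a1 b ⟨p - 1, by omega⟩) *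
            Real.exp Λ := by gcongr
        _ ≤ (c * Real.exp (-μ * ((b : ℝ) - a + j)) *
            (Real.exp Λ * s (a1 - 1) b ⟨p - 1, by omega⟩)) * Real.exp Λ := by gcongr
        _ = _ := by
          rw [show 2 * Λ = Λ + Λ by ring, Real.exp_add]; ring
    have h7 := K1_step (Λ := Λ) (c := c) S.hμ ((b : ℝ) - a + j)
    have h8 : star (k a b) * k (a1 - 1) b =
        (star (k a b) * k a1 b) * (star (k a1 b) * k (a1 - 1) b) := by
      calc _ = star (k a b) * (k a1 b * star (k a1 b)) * k (a1 - 1) b := by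
            rw [unit_mul_star (S.svd a1 b).hk, mul_one]
        _ = _ := by noncomm_ring
    rw [h8]
    refine (triU (norm_unit_le (unit_mul_mem (unit_star_mem (S.svd _ _).hk) (S.svd _ _).hk))
      (norm_unit_le (unit_mul_mem (unit_star_mem (S.svd _ _).hk) (S.svd _ _).hk))).trans ?_
    have e3 : (b : ℝ) - a + ((j + 1 : ℕ) : ℝ) = (b : ℝ) - a + j + 1 := by push_cast; ring
    rw [e3]
    linarith

lemma Sys.chainU (S : Sys hp Λ μ c n m P Q k l s) {a' a b : ℤ} (hn : n ≤ a') (ha : a' ≤ a)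
    (hab : a < b) (hb : b ≤ m) :
    ‖Jq d p * (star (k a b) * k a' b) * Jp d p‖ ≤ K1 Λ μ c * Real.exp (-μ * ((b : ℝ) - a)) := by
  have h := S.chainU_aux hab hb (a - a').toNat (by omega)
  have e : a - ((a - a').toNat : ℤ) = a' := by omega
  rw [e] at h
  refine h.trans ?_
  have := K1_pos (Λ := Λ) S.hμ S.hc
  have := Real.exp_pos (-μ * ((b : ℝ) - a + ((a - a').toNat : ℝ)))
  gcongr
  linarith

lemma Sys.chainR_aux (S : Sys hp Λ μ c n m P Q k l s) {a b : ℤ} (hab : a < b) (ha : n ≤ a)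
    (j : ℕ) : b + j ≤ m → ‖Jp d p * (l a b * star (l a (b + j))) * Jq d p‖ ≤
      K1 Λ μ c * (Real.exp (-μ * ((b : ℝ) - a)) - Real.exp (-μ * ((b : ℝ) - a + j))) := by
  induction j with
  | zero =>
    intro _
    simp [unit_mul_star (S.svd a b).hl, Jp_mul_Jq]
  | succ j ih =>
    intro hn
    have hn' : b + j ≤ m := by push_cast at hn; omega
    have h1 := ih hn'
    set b1 := b + (j : ℤ) with hb1
    have hb2 : b + ((j + 1 : ℕ) : ℤ) = b1 + 1 := by push_cast; omega
    rw [hb2] at hn ⊢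
    have hp1 := S.hp1
    have h2 := cmp_R (S.svd a (b1 + 1)) (S.svd a b1) hp S.hp1 (S.pos _ _ _)
      (D := Q b1 (b1 + 1)) (by
        rw [S.mul a b1 (b1 + 1) (by omega) (by omega), ← mul_assoc, S.QP, one_mul])
    have h3 := S.bQ b1 (b1 + 1) (by omega) (by omega) hn
    have h4 := S.left_le (a := a) (b := b1) (e := b1 + 1) ha (by omega) (by omega) hn
      ⟨p, hp⟩
    have h5 := S.gap a b1 ha (by omega) hn'
    have e1 : (((b1 + 1 : ℤ) : ℤ) : ℝ) - ((b1 : ℤ) : ℝ) = 1 := by push_cast; ring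
    have e2 : (b1 : ℝ) - (a : ℝ) = (b : ℝ) - a + j := by rw [hb1]; push_cast; ring
    rw [e1, mul_one] at h3 h4
    rw [e2] at h5
    have hs := S.pos a b1 ⟨p - 1, by omega⟩
    have hs2 := S.pos a (b1 + 1) ⟨p, hp⟩
    have hc := S.hc
    have h6 : ‖Jp d p * (l a b1 * star (l a (b1 + 1))) * Jq d p‖ ≤
        c * Real.exp (2 * Λ) * Real.exp (-μ * ((b : ℝ) - a + j)) := by
      refine h2.trans ?_
      rw [mul_assoc, inv_mul_le_iff₀ hs]
      calc _ ≤ Real.exp Λ * (Real.exp Λ * (c * Real.exp (-μ * ((b : ℝ) - a + j)) *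
              s a b1 ⟨p - 1, by omega⟩)) := by
            gcongr
            exact h4.trans (by gcongr)
        _ = _ := by
          rw [show 2 * Λ = Λ + Λ by ring, Real.exp_add]; ring
    have h7 := K1_step (Λ := Λ) (c := c) S.hμ ((b : ℝ) - a + j)
    have h8 : l a b * star (l a (b1 + 1)) =
        (l a b * star (l a b1)) * (l a b1 * star (l a (b1 + 1))) := by
      calc _ = l a b * (star (l a b1) * l a b1) * star (l a (b1 + 1)) := by
            rw [unit_star_mul (S.svd a b1).hl, mul_one]
        _ = _ := by noncomm_ring
    rw [h8]
    refine (triR (norm_unit_le (unit_mul_mem (S.svd _ _).hl (unit_star_mem (S.svd _ _).hl)))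
      (norm_unit_le (unit_mul_mem (S.svd _ _).hl (unit_star_mem (S.svd _ _).hl)))).trans ?_
    have e3 : (b : ℝ) - a + ((j + 1 : ℕ) : ℝ) = (b : ℝ) - a + j + 1 := by push_cast; ring
    rw [e3]
    linarith

lemma Sys.chainR (S : Sys hp Λ μ c n m P Q k l s) {a b b' : ℤ} (hn : n ≤ a) (hab : a < b)
    (hb : b ≤ b') (hm : b' ≤ m) :
    ‖Jp d p * (l a b * star (l a b')) * Jq d p‖ ≤ K1 Λ μ c * Real.exp (-μ * ((b : ℝ) - a)) := by
  have h := S.chainR_aux hab hn (b' - b).toNat (by omega)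
  have e : b + ((b' - b).toNat : ℤ) = b' := by omega
  rw [e] at h
  refine h.trans ?_
  have := K1_pos (Λ := Λ) S.hμ S.hc
  have := Real.exp_pos (-μ * ((b : ℝ) - a + ((b' - b).toNat : ℝ)))
  gcongr
  linarith

lemma isSVD_one : IsSVD (1 : Mt d) 1 1 (fun _ => 1) :=
  ⟨one_mem _, one_mem _, fun _ _ _ => le_rfl, fun _ => zero_le_one, by simp⟩

lemma Sys.pr_le (S : Sys hp Λ μ c n m P Q k l s) {a b : ℤ} (ha : n ≤ a) (hab : a ≤ b)
    (hb : b ≤ m) : pr p (s a b) ≤ Real.exp (d * (Λ * ((b : ℝ) - a))) := by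
  have h0 : 0 ≤ Λ * ((b : ℝ) - a) := by
    have : (a : ℝ) ≤ b := by exact_mod_cast hab
    exact mul_nonneg S.hΛ (by linarith)
  have h1 : ∀ i, s a b i ≤ Real.exp (Λ * ((b : ℝ) - a)) := by
    intro i
    have h := svd_le (D := P a b) (D' := 1) isSVD_one (S.svd a b) (by simp) i
    have h2 := norm_one_le (d := d)
    have h3 := S.bP a b ha hab hb
    nlinarith [norm_nonneg (P a b), norm_nonneg (1 : Mt d)]
  have h2 : pr p (s a b) ≤ ∏ _i : Fin d, Real.exp (Λ * ((b : ℝ) - a)) := by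
    apply Finset.prod_le_prod
    · intro i _; split_ifs; exacts [(S.pos _ _ _).le, zero_le_one]
    · intro i _; split_ifs; exacts [h1 i, Real.one_le_exp h0]
  rw [Finset.prod_const, Finset.card_univ, Fintype.card_fin, ← Real.exp_nat_mul] at h2
  exact h2

lemma Sys.pr_ge (S : Sys hp Λ μ c n m P Q k l s) {a b : ℤ} (ha : n ≤ a) (hab : a ≤ b)
    (hb : b ≤ m) : Real.exp (d * (-(Λ * ((b : ℝ) - a)))) ≤ pr p (s a b) := by
  have h0 : 0 ≤ Λ * ((b : ℝ) - a) := by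
    have : (a : ℝ) ≤ b := by exact_mod_cast hab
    exact mul_nonneg S.hΛ (by linarith)
  have h1 : ∀ i, Real.exp (-(Λ * ((b : ℝ) - a))) ≤ s a b i := by
    intro i
    have h := svd_le (D := Q a b) (D' := 1) (S.svd a b) isSVD_one (by simp [S.QP]) i
    have h2 := norm_one_le (d := d)
    have h3 := S.bQ a b ha hab hb
    have h4 := (S.pos a b i).le
    have h5 : 1 ≤ Real.exp (Λ * ((b : ℝ) - a)) * s a b i := by
      calc (1 : ℝ) ≤ _ := h
        _ ≤ Real.exp (Λ * ((b : ℝ) - a)) * s a b i * 1 := by gcongr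
        _ = _ := mul_one _
    rw [Real.exp_neg, inv_le_iff_one_le_mul₀ (Real.exp_pos _)]
    linarith
  have h2 : ∏ _i : Fin d, Real.exp (-(Λ * ((b : ℝ) - a))) ≤ pr p (s a b) := by
    apply Finset.prod_le_prod
    · intro i _; exact (Real.exp_pos _).le
    · intro i _; split_ifs; exacts [h1 i, Real.exp_le_one_iff.2 (by linarith)]
  rw [Finset.prod_const, Finset.card_univ, Fintype.card_fin, ← Real.exp_nat_mul] at h2
  exact h2

lemma Sys.pr_pos (S : Sys hp Λ μ c n m P Q k l s) (a b : ℤ) : 0 < pr p (s a b) := by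
  apply Finset.prod_pos
  intro i _; split_ifs; exacts [S.pos _ _ _, zero_lt_one]

end

lemma svd_q_bound {d p : ℕ} {A k l : Mt d} {s : Fin d → ℝ} (h : IsSVD A k l s) (hp : p < d)
    (x : Euc d) : ‖act (Jq d p * star k) (act A x)‖ ≤ s ⟨p, hp⟩ * ‖x‖ := by
  have e : Jq d p * star k * A = Jq d p * Matrix.diagonal s * l := by
    calc _ = Jq d p * (star k * k) * Matrix.diagonal s * l := by
          conv_lhs => rw [h.eq]
          noncomm_ring
      _ = _ := by rw [unit_star_mul h.hk, mul_one]
  rw [← act_mul, e, act_mul]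
  refine (norm_act_le _ _).trans ?_
  rw [norm_act_unit h.hl]
  gcongr
  exact norm_Jq_diag h hp

lemma svd_p_bound {d p : ℕ} {A k l : Mt d} {s : Fin d → ℝ} (h : IsSVD A k l s) (hp : p - 1 < d)
    (hp1 : 1 ≤ p) (hpos : 0 < s ⟨p - 1, hp⟩) (y : Euc d) :
    s ⟨p - 1, hp⟩ * ‖act (Jp d p * l) y‖ ≤ ‖act A y‖ := by
  have e : Jp d p * l = Ep d p s * (star k * A) := by
    calc _ = Ep d p s * Matrix.diagonal s * l := by rw [Ep_mul_diag h hp hp1 hpos]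
      _ = Ep d p s * ((star k * k) * Matrix.diagonal s * l) := by
          rw [unit_star_mul h.hk]; noncomm_ring
      _ = _ := by
          conv_rhs => rw [h.eq]
          noncomm_ring
  rw [e, act_mul, act_mul]
  have h1 := norm_act_le (Ep d p s) (act (star k) (act A y))
  rw [norm_act_unit (unit_star_mem h.hk)] at h1
  have h2 := norm_Ep_le h hp hp1 hpos
  rw [← le_inv_mul_iff₀ hpos]
  exact h1.trans (by gcongr)

lemma det_small {d p : ℕ} {k l : Mt d} (hk : k ∈ Matrix.unitaryGroup (Fin d) ℝ)
    (hl : l ∈ Matrix.unitaryGroup (Fin d) ℝ) (u : Euc d) {α β : ℝ}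
    (hα : ‖act (Jq d p * star k) u‖ ≤ α) (hβ : ‖act (Jp d p * l) u‖ ≤ β)
    (hh : α ≤ ‖u‖ / 2) :
    |(cor p (l * k)).det| * ‖u‖ ≤ 2 * (d * (d * KD d)) * (α + β) := by
  set ev := act (Jp d p * star k) u with hev
  have h1 : ‖u‖ ≤ ‖ev‖ + α := by
    have e : act (star k) u = ev + act (Jq d p * star k) u := by
      rw [hev, ← add_act, ← add_mul, Jp_add_Jq, one_mul]
    have := norm_add_le ev (act (Jq d p * star k) u)
    rw [← e, norm_act_unit (unit_star_mem hk)] at this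
    linarith
  have h2 : act (cor p (l * k)) ev =
      act (Jp d p * l) u - act (Jp d p * (l * k)) (act (Jq d p * star k) u) := by
    rw [hev, ← act_mul, ← act_mul, ← sub_act]
    congr 1
    have : Jp d p * l = Jp d p * (l * k) * (Jp d p + Jq d p) * star k := by
      rw [Jp_add_Jq, mul_one, mul_assoc, mul_assoc, unit_mul_star hk, mul_one]
    rw [this]
    simp only [cor, add_mul, mul_add, mul_assoc, JpJp', JqJp', add_zero]
    abel
  have hu := norm_unit_le (unit_mul_mem hl hk)
  have h3 : ‖act (Jp d p * (l * k)) (act (Jq d p * star k) u)‖ ≤ α := by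
    have a1 := norm_act_le (Jp d p * (l * k)) (act (Jq d p * star k) u)
    have a2 := norm_mul_le (Jp d p) (l * k)
    have a3 := norm_Jp_le d p
    have a4 : ‖Jp d p * (l * k)‖ ≤ 1 := by
      nlinarith [norm_nonneg (Jp d p), norm_nonneg (l * k)]
    nlinarith [norm_nonneg (act (Jq d p * star k) u)]
  have h4 : ‖act (cor p (l * k)) ev‖ ≤ α + β := by
    rw [h2]
    have := norm_sub_le (act (Jp d p * l) u) (act (Jp d p * (l * k)) (act (Jq d p * star k) u))
    linarith
  have h5 := adj_bound (cor p (l * k)) (norm_cor_le p hu) ev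
  have hK := KD_pos d
  have h6 : (d * (d * KD d)) * ‖act (cor p (l * k)) ev‖ ≤ (d * (d * KD d)) * (α + β) := by
    gcongr
  have h7 : |(cor p (l * k)).det| * ‖u‖ ≤ |(cor p (l * k)).det| * (2 * ‖ev‖) := by
    gcongr; linarith
  linarith

lemma vecU {d p : ℕ} {k0 k1 : Mt d} (h0 : k0 ∈ Matrix.unitaryGroup (Fin d) ℝ)
    (h1 : k1 ∈ Matrix.unitaryGroup (Fin d) ℝ) {κ : ℝ}
    (h : ‖Jq d p * (star k0 * k1) * Jp d p‖ ≤ κ) (u : Euc d) :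
    ‖act (Jq d p * star k0) u‖ ≤ κ * ‖u‖ + ‖act (Jq d p * star k1) u‖ := by
  have e : Jq d p * star k0 = (Jq d p * (star k0 * k1) * Jp d p) * star k1 +
      (Jq d p * (star k0 * k1)) * (Jq d p * star k1) := by
    calc _ = Jq d p * star k0 * (k1 * (Jp d p + Jq d p) * star k1) := by
          rw [Jp_add_Jq, mul_one, unit_mul_star h1, mul_one]
      _ = _ := by noncomm_ring
  rw [e, add_act, act_mul, act_mul _ (Jq d p * star k1)]
  refine (norm_add_le _ _).trans (add_le_add ?_ ?_)
  · refine (norm_act_le _ _).trans ?_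
    rw [norm_act_unit (unit_star_mem h1)]
    gcongr
  · refine (norm_act_le _ _).trans ?_
    have a2 := norm_mul_le (Jq d p) (star k0 * k1)
    have a3 := norm_Jq_le d p
    have hu := norm_unit_le (unit_mul_mem (unit_star_mem h0) h1)
    have a4 : ‖Jq d p * (star k0 * k1)‖ ≤ 1 := by
      nlinarith [norm_nonneg (Jq d p), norm_nonneg (star k0 * k1)]
    nlinarith [norm_nonneg (act (Jq d p * star k1) u)]

lemma vecR {d p : ℕ} {l0 l1 : Mt d} (h0 : l0 ∈ Matrix.unitaryGroup (Fin d) ℝ)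
    (h1 : l1 ∈ Matrix.unitaryGroup (Fin d) ℝ) {κ : ℝ}
    (h : ‖Jp d p * (l0 * star l1) * Jq d p‖ ≤ κ) (u : Euc d) :
    ‖act (Jp d p * l0) u‖ ≤ κ * ‖u‖ + ‖act (Jp d p * l1) u‖ := by
  have e : Jp d p * l0 = (Jp d p * (l0 * star l1) * Jq d p) * l1 +
      (Jp d p * (l0 * star l1)) * (Jp d p * l1) := by
    calc _ = Jp d p * l0 * (star l1 * (Jp d p + Jq d p) * l1) := by
          rw [Jp_add_Jq, mul_one, unit_star_mul h1, mul_one]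
      _ = _ := by noncomm_ring
  rw [e, add_act, act_mul, act_mul _ (Jp d p * l1)]
  refine (norm_add_le _ _).trans (add_le_add ?_ ?_)
  · refine (norm_act_le _ _).trans ?_
    rw [norm_act_unit h1]
    gcongr
  · refine (norm_act_le _ _).trans ?_
    have a2 := norm_mul_le (Jp d p) (l0 * star l1)
    have a3 := norm_Jp_le d p
    have hu := norm_unit_le (unit_mul_mem h0 (unit_star_mem h1))
    have a4 : ‖Jp d p * (l0 * star l1)‖ ≤ 1 := by
      nlinarith [norm_nonneg (Jp d p), norm_nonneg (l0 * star l1)]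
    nlinarith [norm_nonneg (act (Jp d p * l1) u)]

/-- volume drop constant -/
def K2 (d : ℕ) (Λ μ c : ℝ) : ℝ := KD d * KD d * (2 * (d * (d * KD d)) * (2 * K1 Λ μ c + 1))

section
variable {d p : ℕ} {hp : p < d} {Λ μ c : ℝ} {n m : ℤ} {P Q k l : ℤ → ℤ → Mt d}
    {s : ℤ → ℤ → Fin d → ℝ}

lemma Sys.key (S : Sys hp Λ μ c n m P Q k l s) {a t e : ℤ} (ha : n ≤ a) (hat : a < t)
    (hte : t < e) (he : e ≤ m) (hl : e - t = t - a) {ut yt : Euc d} {ω η E : ℝ}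
    (hE : E = Real.exp (-μ * ((t : ℝ) - a)))
    (hu0 : 0 < ‖ut‖)
    (hU : ‖act (Jq d p * star (k n t)) ut‖ ≤ ω) (hY : ‖act (Jp d p * l t m) yt‖ ≤ ω)
    (hη : ‖ut - yt‖ ≤ η) (hsmall : 2 * ω + (1 + K1 Λ μ c) * η ≤ E * ‖ut‖)
    (hE1 : (K1 Λ μ c + 1) * E ≤ 1 / 4) (hE2 : c * E ≤ 1 / 64) :
    pr p (s a e) ≤ K2 d Λ μ c * E * (pr p (s a t) * pr p (s t e)) := by
  have hK1 := K1_pos (Λ := Λ) S.hμ S.hc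
  have hE0 : 0 < E := by rw [hE]; exact Real.exp_pos _
  have hlr : (e : ℝ) - t = (t : ℝ) - a := by exact_mod_cast hl
  have hatr : (a : ℝ) < t := by exact_mod_cast hat
  have hE3 : E ≤ 1 := by nlinarith
  have hη0 : 0 ≤ η := (norm_nonneg _).trans hη
  have hω0 : 0 ≤ ω := (norm_nonneg _).trans hU
  have c1 := S.chainU ha hat.le hte he
  have c2 := S.chainR ha hat hte.le he
  have c3 := S.chainU (le_refl n) ha hat (by omega)
  have c4 := S.chainR (by omega) hte he (le_refl m)
  rw [hlr] at c1 c4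
  rw [← hE] at c1 c2 c3 c4
  have v1 := vecU (S.svd a t).hk (S.svd n t).hk c3 ut
  have v2 := vecR (S.svd t e).hl (S.svd t m).hl c4 yt
  have v3 : ‖act (Jp d p * l t e) ut‖ ≤ ‖act (Jp d p * l t e) yt‖ + η := by
    have e1 : act (Jp d p * l t e) ut = act (Jp d p * l t e) yt +
        act (Jp d p * l t e) (ut - yt) := by rw [act_sub]; abel
    have e2 : ‖act (Jp d p * l t e) (ut - yt)‖ ≤ η := by
      have a2 := norm_mul_le (Jp d p) (l t e)
      have a3 := norm_Jp_le d p
      have hu := norm_unit_le (S.svd t e).hl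
      have a4 : ‖Jp d p * l t e‖ ≤ 1 := by
        nlinarith [norm_nonneg (Jp d p), norm_nonneg (l t e)]
      have := norm_act_le (Jp d p * l t e) (ut - yt)
      nlinarith [norm_nonneg (ut - yt)]
    rw [e1]
    exact (norm_add_le _ _).trans (by linarith)
  have v4 : ‖yt‖ ≤ ‖ut‖ + η := by
    have := norm_sub_norm_le yt ut
    rw [norm_sub_rev] at this
    linarith
  have v5 : K1 Λ μ c * E * ‖yt‖ ≤ K1 Λ μ c * E * ‖ut‖ + K1 Λ μ c * η := by
    have : K1 Λ μ c * E * ‖yt‖ ≤ K1 Λ μ c * E * (‖ut‖ + η) := by gcongr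
    have h2 : K1 Λ μ c * E * η ≤ K1 Λ μ c * 1 * η := by gcongr
    linarith
  have hωE : ω ≤ E * ‖ut‖ := by
    have : 0 ≤ (1 + K1 Λ μ c) * η := by positivity
    linarith
  have hs := det_small (p := p) (S.svd a t).hk (S.svd t e).hl ut
    (α := K1 Λ μ c * E * ‖ut‖ + ω) (β := K1 Λ μ c * E * ‖ut‖ + K1 Λ μ c * η + ω + η)
    (by linarith) (by linarith) (by nlinarith)
  have hKD := KD_pos d
  have hs2 : |(cor p (l t e * k a t)).det| ≤
      2 * (d * (d * KD d)) * (2 * K1 Λ μ c + 1) * E := by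
    have : |(cor p (l t e * k a t)).det| * ‖ut‖ ≤
        2 * (d * (d * KD d)) * ((2 * K1 Λ μ c + 1) * E * ‖ut‖) := by
      refine hs.trans ?_
      gcongr
      linarith
    rw [← mul_le_mul_iff_left₀ hu0]
    linarith
  have hgap := S.gap a e ha (by omega) he
  have hp1 := S.hp1
  have hspos := S.pos a e ⟨p - 1, by omega⟩
  have hgap2 : s a e ⟨p, hp⟩ ≤ (1 / 64) * s a e ⟨p - 1, by omega⟩ := by
    refine hgap.trans ?_
    have : Real.exp (-μ * ((e : ℝ) - a)) ≤ E := by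
      rw [hE]
      apply Real.exp_le_exp.2
      have := S.hμ
      nlinarith
    have hc := S.hc
    gcongr
    exact le_trans (by gcongr) hE2
  have hv := volume_mul (S.svd a t) (S.svd t e) (S.svd a e)
    (S.mul a t e hat.le hte.le) hp S.hp1 hspos
    (by linarith) (by linarith) hgap2
  rw [abs_of_pos (S.pr_pos _ _), abs_of_pos (S.pr_pos _ _), abs_of_pos (S.pr_pos _ _)] at hv
  have hA := S.pr_pos a t
  have hB := S.pr_pos t e
  have hv2 : (KD d)⁻¹ * (KD d)⁻¹ * pr p (s a e) ≤
      pr p (s a t) * pr p (s t e) * (2 * (d * (d * KD d)) * (2 * K1 Λ μ c + 1) * E) :=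
    hv.trans (by gcongr)
  rw [← mul_inv, inv_mul_le_iff₀ (by positivity)] at hv2
  rw [K2]
  linarith

end

lemma dyadic {f : ℤ → ℤ → ℝ} (hf : ∀ a b, 0 < f a b) {t0 T L0 : ℤ} (hL0 : 1 ≤ L0)
    {κ μ D : ℝ}
    (hbase : ∀ a, t0 ≤ a → a + L0 ≤ t0 + T → f a (a + L0) ≤ Real.exp (D * L0))
    (hstep : ∀ a ℓ : ℤ, t0 ≤ a → L0 ≤ ℓ → a + 2 * ℓ ≤ t0 + T →
      f a (a + 2 * ℓ) ≤ Real.exp κ * Real.exp (-μ * ℓ) * (f a (a + ℓ) * f (a + ℓ) (a + 2 * ℓ)))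
    (j : ℕ) : ∀ a, t0 ≤ a → a + 2 ^ j * L0 ≤ t0 + T →
      f a (a + 2 ^ j * L0) ≤
        Real.exp (2 ^ j * (D * L0 + κ - j * (μ * L0 / 2)) - κ) := by
  induction j with
  | zero =>
    intro a ha hT
    simp only [pow_zero, one_mul] at hT ⊢
    refine (hbase a ha hT).trans (le_of_eq ?_)
    congr 1; push_cast; ring
  | succ j ih =>
    intro a ha hT
    set ℓ : ℤ := 2 ^ j * L0 with hℓ
    have h1 : (2 : ℤ) ^ (j + 1) * L0 = 2 * ℓ := by rw [hℓ]; ring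
    rw [h1] at hT ⊢
    have h2 : L0 ≤ ℓ := by
      have : (1 : ℤ) ≤ 2 ^ j := one_le_pow₀ (by norm_num)
      nlinarith
    have i1 := ih a ha (by omega)
    have i2 := ih (a + ℓ) (by omega) (by omega)
    rw [show a + ℓ + ℓ = a + 2 * ℓ by ring] at i2
    refine (hstep a ℓ ha h2 hT).trans ?_
    have p1 := hf a (a + ℓ)
    have p2 := hf (a + ℓ) (a + 2 * ℓ)
    calc _ ≤ Real.exp κ * Real.exp (-μ * ℓ) *
          (Real.exp (2 ^ j * (D * L0 + κ - j * (μ * L0 / 2)) - κ) *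
            Real.exp (2 ^ j * (D * L0 + κ - j * (μ * L0 / 2)) - κ)) := by gcongr
      _ = _ := by
        rw [← Real.exp_add, ← Real.exp_add, ← Real.exp_add]
        congr 1
        rw [hℓ]; push_cast; ring

section
variable {d p : ℕ} {hp : p < d} {Λ μ c : ℝ} {n m : ℤ} {P Q k l : ℤ → ℤ → Mt d}
    {s : ℤ → ℤ → Fin d → ℝ}

set_option maxHeartbeats 1000000 in
lemma Sys.failure (S : Sys hp Λ μ c n m P Q k l s) {t0 : ℤ} {L0 N : ℕ} {T L : ℝ} {η κ : ℝ}
    (hL0 : 1 ≤ L0) (hT : T = 2 ^ N * L0) (hnt : n ≤ t0) (htm : t0 + 2 ^ N * L0 ≤ m)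
    (hLn : L ≤ (t0 : ℝ) - n) (hLm : L ≤ (m : ℝ) - t0) (_hLT : T < L)
    (hκ : 0 ≤ κ) (hK2 : K2 d Λ μ c ≤ Real.exp κ)
    (hE1 : (K1 Λ μ c + 1) * Real.exp (-μ * L0) ≤ 1 / 4)
    (hE2 : c * Real.exp (-μ * L0) ≤ 1 / 64)
    (hN : 2 * (d * Λ) * L0 + κ < N * (μ * L0 / 2))
    (hsmall : 2 * (c * Real.exp (Λ * T + μ * T - μ * L)) + (1 + K1 Λ μ c) *
      (Real.exp (Λ * T) * η) ≤ Real.exp (-μ * T) * Real.exp (-(Λ * T)))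
    {u y x : Euc d} (hu : ‖u‖ = 1) (huy : ‖u - y‖ ≤ η)
    (hx : act (P n t0) x = u) (hxs : s n t0 ⟨p - 1, by omega⟩ * ‖x‖ ≤ 1)
    (hy : ‖act (P t0 m) y‖ ≤ s t0 m ⟨p, hp⟩) : False := by
  have hc := S.hc
  have hμ := S.hμ
  have hΛ := S.hΛ
  have hK1 := K1_pos (Λ := Λ) S.hμ S.hc
  have hp1 := S.hp1
  have hL0r : (1 : ℝ) ≤ L0 := by exact_mod_cast hL0
  have hη0 : 0 ≤ η := (norm_nonneg _).trans huy
  have hT0 : 0 ≤ T := by rw [hT]; positivity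
  have htT : ∀ t : ℤ, t ≤ t0 + 2 ^ N * L0 → (t : ℝ) - t0 ≤ T := by
    intro t h
    have : (t : ℝ) ≤ t0 + 2 ^ N * L0 := by exact_mod_cast h
    rw [hT]; linarith
  have hstep : ∀ a ℓ : ℤ, t0 ≤ a → (L0 : ℤ) ≤ ℓ → a + 2 * ℓ ≤ t0 + 2 ^ N * L0 →
      pr p (s a (a + 2 * ℓ)) ≤ Real.exp κ * Real.exp (-μ * ℓ) *
        (pr p (s a (a + ℓ)) * pr p (s (a + ℓ) (a + 2 * ℓ))) := by
    intro a ℓ ha hℓ hend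
    set t := a + ℓ with ht
    have hℓ1 : 1 ≤ ℓ := by omega
    have ht0 : t0 ≤ t := by omega
    have htm' : t < m := by omega
    have htT' := htT t (by omega)
    have ht0r : (t0 : ℝ) ≤ t := by exact_mod_cast ht0
    have hℓr : (L0 : ℝ) ≤ ℓ := by exact_mod_cast hℓ
    have hta : (t : ℝ) - a = ℓ := by rw [ht]; push_cast; ring
    have har : (t0 : ℝ) ≤ a := by exact_mod_cast ha
    have hexpT : Real.exp (Λ * ((t : ℝ) - t0)) ≤ Real.exp (Λ * T) := by
      apply Real.exp_le_exp.2; gcongr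
    have bP := S.bP t0 t hnt ht0 htm'.le
    have bQ := S.bQ t0 t hnt ht0 htm'.le
    have hQ : act (Q t0 t) (act (P t0 t) u) = u := by rw [← act_mul, S.QP, act_one]
    have hut : Real.exp (-(Λ * T)) ≤ ‖act (P t0 t) u‖ := by
      have h1 := norm_act_le (Q t0 t) (act (P t0 t) u)
      rw [hQ, hu] at h1
      have h2 : 1 ≤ Real.exp (Λ * T) * ‖act (P t0 t) u‖ := by
        refine h1.trans ?_
        gcongr
        exact bQ.trans hexpT
      rw [Real.exp_neg, inv_le_iff_one_le_mul₀ (Real.exp_pos _)]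
      linarith
    have hux : act (P t0 t) u = act (P n t) x := by
      rw [S.mul n t0 t hnt ht0, act_mul, hx]
    have hsx : s n t ⟨p - 1, by omega⟩ * ‖x‖ ≤ Real.exp (Λ * T) := by
      have h1 := S.left_le le_rfl hnt ht0 htm'.le ⟨p - 1, by omega⟩
      calc _ ≤ (Real.exp (Λ * ((t : ℝ) - t0)) * s n t0 ⟨p - 1, by omega⟩) * ‖x‖ := by gcongr
        _ = Real.exp (Λ * ((t : ℝ) - t0)) * (s n t0 ⟨p - 1, by omega⟩ * ‖x‖) := by ring
        _ ≤ Real.exp (Λ * T) * 1 := by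
          have := (S.pos n t0 ⟨p - 1, by omega⟩).le
          gcongr
        _ = _ := mul_one _
    have hU : ‖act (Jq d p * star (k n t)) (act (P t0 t) u)‖ ≤
        c * Real.exp (Λ * T + μ * T - μ * L) := by
      rw [hux]
      refine (svd_q_bound (S.svd n t) hp x).trans ?_
      have g := S.gap n t le_rfl (by omega) htm'.le
      calc _ ≤ (c * Real.exp (-μ * ((t : ℝ) - n)) * s n t ⟨p - 1, by omega⟩) * ‖x‖ := by gcongr
        _ = c * Real.exp (-μ * ((t : ℝ) - n)) * (s n t ⟨p - 1, by omega⟩ * ‖x‖) := by ring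
        _ ≤ c * Real.exp (-μ * ((t : ℝ) - n)) * Real.exp (Λ * T) := by gcongr
        _ = c * Real.exp (-μ * ((t : ℝ) - n) + Λ * T) := by rw [Real.exp_add]; ring
        _ ≤ _ := by
          gcongr
          nlinarith
    have hY : ‖act (Jp d p * l t m) (act (P t0 t) y)‖ ≤
        c * Real.exp (Λ * T + μ * T - μ * L) := by
      have hpos := S.pos t m ⟨p - 1, by omega⟩
      have h1 := svd_p_bound (S.svd t m) (by omega) hp1 hpos (act (P t0 t) y)
      rw [← act_mul (P t m), ← S.mul t0 t m ht0 htm'.le] at h1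
      have h2 := S.right_le hnt ht0 htm'.le le_rfl ⟨p, hp⟩
      have g := S.gap t m (by omega) htm' le_rfl
      rw [← mul_le_mul_iff_right₀ hpos]
      calc _ ≤ _ := h1
        _ ≤ _ := hy
        _ ≤ _ := h2
        _ ≤ Real.exp (Λ * T) * (c * Real.exp (-μ * ((m : ℝ) - t)) * s t m ⟨p - 1, by omega⟩) := by
          gcongr
          exact (S.pos _ _ _).le
        _ = s t m ⟨p - 1, by omega⟩ * (c * Real.exp (-μ * ((m : ℝ) - t) + Λ * T)) := by
          rw [Real.exp_add]; ring
        _ ≤ _ := by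
          gcongr
          nlinarith
    have hη : ‖act (P t0 t) u - act (P t0 t) y‖ ≤ Real.exp (Λ * T) * η := by
      rw [← act_sub]
      refine (norm_act_le _ _).trans ?_
      gcongr
      exact bP.trans hexpT
    have hEle : Real.exp (-μ * ((t : ℝ) - a)) ≤ Real.exp (-μ * L0) := by
      apply Real.exp_le_exp.2
      rw [hta]; nlinarith
    have hkey := S.key (a := a) (t := t) (e := a + 2 * ℓ) (by omega) (by omega) (by omega)
      (by omega) (by omega) rfl (lt_of_lt_of_le (Real.exp_pos _) hut) hU hY hη ?_ ?_ ?_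
    · refine hkey.trans ?_
      rw [hta]
      have := S.pr_pos a t
      have := S.pr_pos t (a + 2 * ℓ)
      gcongr
    · refine hsmall.trans ?_
      have hTa : Real.exp (-μ * T) ≤ Real.exp (-μ * ((t : ℝ) - a)) := by
        apply Real.exp_le_exp.2
        have : (t : ℝ) - a ≤ T := by linarith
        nlinarith
      exact mul_le_mul hTa hut (Real.exp_pos _).le (Real.exp_pos _).le
    · exact le_trans (by gcongr) hE1
    · exact le_trans (by gcongr) hE2
  have hfin := dyadic (f := fun a b => pr p (s a b)) (fun a b => S.pr_pos a b)
    (t0 := t0) (T := 2 ^ N * L0) (L0 := L0) (by exact_mod_cast hL0) (κ := κ) (μ := μ)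
    (D := d * Λ) (by
      intro a ha hb
      refine (S.pr_le (by omega) (by omega) (by omega)).trans (le_of_eq ?_)
      congr 1; push_cast; ring) hstep N t0 le_rfl le_rfl
  have hge := S.pr_ge hnt (show t0 ≤ t0 + 2 ^ N * (L0 : ℤ) by
    have : (0 : ℤ) ≤ 2 ^ N * (L0 : ℤ) := by positivity
    omega) htm
  have h := Real.exp_le_exp.1 (hge.trans hfin)
  push_cast at h
  have h2 : (2 : ℝ) ^ N * (N * (μ * L0 / 2)) ≤ 2 ^ N * (2 * (d * Λ) * L0 + κ) := by
    ring_nf at h ⊢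
    linarith
  have h3 := le_of_mul_le_mul_left h2 (by positivity)
  linarith

end

lemma exp_small {μ : ℝ} (hμ : 0 < μ) {A B : ℝ} (hA : 0 < A) (hB : 0 < B) :
    ∃ n0 : ℕ, ∀ n : ℕ, n0 ≤ n → A * Real.exp (-μ * n) ≤ B := by
  obtain ⟨n0, h0⟩ := exists_nat_gt (-Real.log (B / A) / μ)
  refine ⟨n0, fun n hn => ?_⟩
  have hn' : (n0 : ℝ) ≤ n := by exact_mod_cast hn
  rw [div_lt_iff₀ hμ] at h0
  have h1 : -μ * n ≤ Real.log (B / A) := by nlinarith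
  have h2 := Real.exp_le_exp.2 h1
  rw [Real.exp_log (by positivity), le_div_iff₀ hA] at h2
  linarith

lemma exists_consts (d : ℕ) {Λ μ c : ℝ} (hμ : 0 < μ) (hc : 0 < c) :
    ∃ L0 N L : ℕ, ∃ κ η : ℝ, 1 ≤ L0 ∧ 2 ^ N * L0 < L ∧ 0 ≤ κ ∧ 0 < η ∧
      K2 d Λ μ c ≤ Real.exp κ ∧
      (K1 Λ μ c + 1) * Real.exp (-μ * L0) ≤ 1 / 4 ∧ c * Real.exp (-μ * L0) ≤ 1 / 64 ∧
      2 * (d * Λ) * L0 + κ < N * (μ * L0 / 2) ∧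
      2 * (c * Real.exp (Λ * (2 ^ N * L0) + μ * (2 ^ N * L0) - μ * L)) + (1 + K1 Λ μ c) *
        (Real.exp (Λ * (2 ^ N * L0)) * η) ≤
        Real.exp (-μ * (2 ^ N * L0)) * Real.exp (-(Λ * (2 ^ N * L0))) ∧
      ∀ j : ℕ, L ≤ j → c * Real.exp (-μ * j) ≤ 1 / 2 := by
  have hK1 := K1_pos (Λ := Λ) hμ hc
  obtain ⟨n1, h1⟩ := exp_small hμ (A := K1 Λ μ c + 1) (by linarith)
    (show (0 : ℝ) < 1 / 4 by norm_num)
  obtain ⟨n2, h2⟩ := exp_small hμ hc (show (0 : ℝ) < 1 / 64 by norm_num)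
  obtain ⟨L0, hL0⟩ : ∃ L0 : ℕ, L0 = n1 + n2 + 1 := ⟨_, rfl⟩
  have hL0p : (0 : ℝ) < L0 := by exact_mod_cast (by omega : 0 < L0)
  obtain ⟨κ, hκ⟩ : ∃ κ : ℝ, κ = |K2 d Λ μ c| := ⟨_, rfl⟩
  have hκe : K2 d Λ μ c ≤ Real.exp κ := by
    have := Real.add_one_le_exp κ
    have := le_abs_self (K2 d Λ μ c)
    linarith
  obtain ⟨N, hN⟩ := exists_nat_gt ((2 * (d * Λ) * L0 + κ) / (μ * L0 / 2))
  rw [div_lt_iff₀ (by positivity)] at hN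
  obtain ⟨T, hT⟩ : ∃ T : ℝ, T = 2 ^ N * L0 := ⟨_, rfl⟩
  obtain ⟨R, hR⟩ : ∃ R : ℝ, R = Real.exp (-μ * T) * Real.exp (-(Λ * T)) := ⟨_, rfl⟩
  have hRp : 0 < R := by rw [hR]; positivity
  obtain ⟨n3, h3⟩ := exp_small hμ (A := 2 * (c * Real.exp (Λ * T + μ * T))) (by positivity)
    (half_pos hRp)
  obtain ⟨n4, h4⟩ := exp_small hμ hc (show (0 : ℝ) < 1 / 2 by norm_num)
  refine ⟨L0, N, 2 ^ N * L0 + 1 + n3 + n4, κ, R / 2 / ((1 + K1 Λ μ c) * Real.exp (Λ * T)),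
    by omega, by omega, by rw [hκ]; positivity, by positivity, hκe, h1 _ (by omega),
    h2 _ (by omega), hN, ?_, fun j hj => h4 j (by omega)⟩
  rw [← hT, ← hR]
  have h5 := h3 (2 ^ N * L0 + 1 + n3 + n4) (by omega)
  have e1 : (1 + K1 Λ μ c) * (Real.exp (Λ * T) *
      (R / 2 / ((1 + K1 Λ μ c) * Real.exp (Λ * T)))) = R / 2 := by
    field_simp
  rw [e1, sub_eq_add_neg, Real.exp_add, ← neg_mul]
  linarith

lemma prodSeq_add {d : ℕ} (g : ℤ → GL (Fin d) ℝ) (n : ℤ) (a b : ℕ) :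
    prodSeq g n (a + b) = prodSeq g (n + a) b * prodSeq g n a := by
  induction b with
  | zero => simp [prodSeq]
  | succ b ih =>
    rw [← add_assoc, prodSeq, ih, prodSeq, mul_assoc]
    congr 2
    push_cast; ring

lemma mat_mul {d : ℕ} (g h : GL (Fin d) ℝ) : mat (g * h) = mat g * mat h := rfl

lemma mat_mul_inv {d : ℕ} (g : GL (Fin d) ℝ) : mat g * mat g⁻¹ = 1 := by
  rw [← mat_mul, mul_inv_cancel]; rfl

lemma mat_inv_mul {d : ℕ} (g : GL (Fin d) ℝ) : mat g⁻¹ * mat g = 1 := by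
  rw [← mat_mul, inv_mul_cancel]; rfl

lemma mat_det {d : ℕ} (g : GL (Fin d) ℝ) : (mat g).det ≠ 0 := by
  intro h
  have := congrArg Matrix.det (mat_mul_inv g)
  rw [Matrix.det_mul, h, zero_mul, Matrix.det_one] at this
  exact zero_ne_one this

lemma prodSeq_norm {d : ℕ} (g : ℤ → GL (Fin d) ℝ) {C : ℝ} (hC : 1 ≤ C) (n m : ℤ)
    (hg : ∀ i, n ≤ i → i < m → ‖mat (g i)‖ ≤ C ∧ ‖mat (g i)⁻¹‖ ≤ C) (a : ℤ) (ha : n ≤ a)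
    (j : ℕ) : a + j ≤ m → ‖mat (prodSeq g a j)‖ ≤ C ^ j ∧ ‖mat (prodSeq g a j)⁻¹‖ ≤ C ^ j := by
  induction j with
  | zero =>
    intro _
    have h := norm_one_le (d := d)
    have e : mat (1 : GL (Fin d) ℝ) = 1 := rfl
    simp only [prodSeq, inv_one, e, pow_zero]
    exact ⟨h, h⟩
  | succ j ih =>
    intro hm
    push_cast at hm
    obtain ⟨i1, i2⟩ := ih (by omega)
    obtain ⟨g1, g2⟩ := hg (a + j) (by omega) (by omega)
    have hC0 : 0 ≤ C := by linarith
    rw [prodSeq, mul_inv_rev, mat_mul, mat_mul]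
    constructor
    · refine (norm_mul_le _ _).trans ?_
      rw [pow_succ, mul_comm (C ^ j)]
      gcongr
    · refine (norm_mul_le _ _).trans ?_
      rw [pow_succ]
      gcongr

lemma mkSys {d p : ℕ} (hp : p < d) (hp1 : 1 ≤ p) {C μ c : ℝ} (hC : 1 < C) (hμ : 0 < μ)
    (hc : 0 < c) (g : ℤ → GL (Fin d) ℝ) (n m : ℤ)
    (hg : ∀ i, n ≤ i → i < m → ‖mat (g i)‖ ≤ C ∧ ‖mat (g i)⁻¹‖ ≤ C)
    (hgap : ∀ a b, n ≤ a → a < b → b ≤ m →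
      sv (mat (prodSeq g a (b - a).toNat)) (p + 1) / sv (mat (prodSeq g a (b - a).toNat)) p ≤
        c * Real.exp (-μ * ((b : ℝ) - a))) :
    ∃ k l s, Sys hp (Real.log C) μ c n m (fun a b => mat (prodSeq g a (b - a).toNat))
      (fun a b => mat (prodSeq g a (b - a).toNat)⁻¹) k l s := by
  choose k l s h using fun a b : ℤ =>
    exists_svd (mat (prodSeq g a (b - a).toNat)) (mat_det _)
  have hpos : ∀ a b i, 0 < s a b i := fun a b i => svd_pos (h a b) (mat_det _) i
  have hexp : ∀ a b : ℤ, a ≤ b → C ^ (b - a).toNat = Real.exp (Real.log C * ((b : ℝ) - a)) := by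
    intro a b hab
    have : (b : ℝ) - a = ((b - a).toNat : ℝ) := by
      have : ((b - a).toNat : ℤ) = b - a := by omega
      exact_mod_cast this.symm
    rw [this, mul_comm, Real.exp_nat_mul, Real.exp_log (by linarith)]
  refine ⟨k, l, s, hp1, Real.log_nonneg hC.le, hμ, hc, h, hpos, fun _ _ => mat_mul_inv _,
    fun _ _ => mat_inv_mul _, ?_, ?_, ?_, ?_⟩
  · intro a b e hab hbe
    have e1 : (e - a).toNat = (b - a).toNat + (e - b).toNat := by omega
    have e2 : a + ((b - a).toNat : ℤ) = b := by omega
    change mat _ = mat _ * mat _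
    rw [e1, prodSeq_add, e2, mat_mul]
  · intro a b ha hab hb
    rw [← hexp a b hab]
    exact (prodSeq_norm g hC.le n m hg a ha _ (by omega)).1
  · intro a b ha hab hb
    rw [← hexp a b hab]
    exact (prodSeq_norm g hC.le n m hg a ha _ (by omega)).2
  · intro a b ha hab hb
    have h1 := hgap a b ha hab hb
    obtain ⟨q, rfl⟩ : ∃ q, p = q + 1 := ⟨p - 1, by omega⟩
    rw [sv_eq (h a b) (q + 1) hp, sv_eq (h a b) q (by omega), div_le_iff₀ (hpos _ _ _)] at h1
    exact h1

lemma norm_sub_le_angle {d : ℕ} {u y : Euc d} (hu : ‖u‖ = 1) (hy : ‖y‖ = 1) :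
    ‖u - y‖ ≤ InnerProductGeometry.angle u y := by
  have h1 := InnerProductGeometry.cos_angle_mul_norm_mul_norm u y
  have h2 := Real.one_sub_sq_div_two_le_cos (x := InnerProductGeometry.angle u y)
  have h3 := norm_sub_sq_real u y
  rw [hu, hy] at *
  have h4 := InnerProductGeometry.angle_nonneg u y
  apply abs_le_of_sq_le_sq' _ h4 |>.2
  nlinarith

lemma gap_inv {d p : ℕ} (hp : p < d) (hp1 : 1 ≤ p) {A B k l : Mt d} {s : Fin d → ℝ}
    (h : IsSVD A k l s) (hA : A.det ≠ 0) (hB : A * B = 1) :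
    sv B (d - p) = (s ⟨p, hp⟩)⁻¹ ∧ sv B (d - p + 1) = (s ⟨p - 1, by omega⟩)⁻¹ := by
  have h' := svd_inv h hA hB
  constructor
  · have e := sv_eq h' (d - p - 1) (by omega)
    rw [show d - p - 1 + 1 = d - p by omega] at e
    rw [e]
    congr 2
    ext
    simp [Fin.val_rev]
    omega
  · rw [sv_eq h' (d - p) (by omega)]
    congr 2
    ext
    simp [Fin.val_rev]
    omega

end Helpers

/-- Lemma 2.5 of [BPS]: transversality along dominated sequences. -/
theorem stmt9 {d : ℕ} (hd : 2 ≤ d) (p : ℕ) (hp1 : 1 ≤ p) (hpd : p ≤ d - 1)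
    (C : ℝ) (hC : 1 < C) (μ : ℝ) (hμ : 0 < μ) (c : ℝ) (hc : 0 < c) :
    ∃ L : ℕ, ∃ δ > (0 : ℝ), ∀ I : Set ℤ, I.OrdConnected →
      ∀ gseq : ℤ → GL (Fin d) ℝ,
        (∀ i ∈ I, opNorm (mat (gseq i)) ≤ C ∧ opNorm (mat ((gseq i)⁻¹)) ≤ C) →
        (∀ n ∈ I, ∀ m ∈ I, n ≤ m →
          sv (mat (prodSeq gseq n (m - n + 1).toNat)) (p + 1) /
              sv (mat (prodSeq gseq n (m - n + 1).toNat)) p ≤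
            c * Real.exp (-μ * ((m : ℝ) - (n : ℝ) + 1))) →
        ∀ n ∈ I, ∀ k ∈ I, ∀ m ∈ I, n < k → k < m →
          (L : ℤ) < min (k - n) (m - k) →
          HasGap (mat (prodSeq gseq n (k - n).toNat)) p ∧
          HasGap (mat ((prodSeq gseq k (m - k).toNat)⁻¹)) (d - p) ∧
          δ < subAngle (cartanAttractor (mat (prodSeq gseq n (k - n).toNat)) p)
                (cartanAttractor (mat ((prodSeq gseq k (m - k).toNat)⁻¹)) (d - p)) := by
  have hp : p < d := by omega
  obtain ⟨L0, N, L, κ, η, hL0, hLT, hκ, hη, hK2, hE1, hE2, hN, hsmall, hL⟩ :=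
    exists_consts d (Λ := Real.log C) hμ hc
  refine ⟨L, η / 2, half_pos hη, ?_⟩
  intro I hI gseq hg hgap n hn t hk m hm hnt htm hmin
  have hLn : (L : ℤ) < t - n := lt_of_lt_of_le hmin (min_le_left _ _)
  have hLm : (L : ℤ) < m - t := lt_of_lt_of_le hmin (min_le_right _ _)
  have hmem : ∀ i, n ≤ i → i < m → i ∈ I := fun i h1 h2 => hI.out hn hm ⟨h1, h2.le⟩
  obtain ⟨k, l, s, S⟩ := mkSys hp hp1 hC hμ hc gseq n m
    (fun i h1 h2 => hg i (hmem i h1 h2)) (by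
      intro a b ha hab hb
      have h := hgap a (hmem a ha (by omega)) (b - 1) (hmem _ (by omega) (by omega)) (by omega)
      rw [show b - 1 - a + 1 = b - a by ring] at h
      refine h.trans (le_of_eq ?_)
      push_cast
      ring_nf)
  have hgap' : ∀ a b : ℤ, n ≤ a → a < b → b ≤ m → (L : ℤ) ≤ b - a →
      s a b ⟨p, hp⟩ < s a b ⟨p - 1, by omega⟩ := by
    intro a b ha hab hb hLab
    have h1 := S.gap a b ha hab hb
    have h2 := hL (b - a).toNat (by omega)
    have e : (((b - a).toNat : ℕ) : ℝ) = (b : ℝ) - a := by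
      have : ((b - a).toNat : ℤ) = b - a := by omega
      exact_mod_cast this
    rw [e] at h2
    have h3 := S.pos a b ⟨p - 1, by omega⟩
    nlinarith
  have hsvp : sv (mat (prodSeq gseq n (t - n).toNat)) p = s n t ⟨p - 1, by omega⟩ := by
    have h := sv_eq (S.svd n t) (p - 1) (by omega)
    rw [show p - 1 + 1 = p by omega] at h
    exact h
  have hinv := gap_inv hp hp1 (S.svd t m) (mat_det _) (S.PQ t m)
  have hA := attr_prop (mat_det (prodSeq gseq n (t - n).toNat)) hp1 hp.le
    (cartan_spec (mat_det _) p)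
  have hB := attr_prop (mat_det (prodSeq gseq t (m - t).toNat)⁻¹) (q := d - p) (by omega)
    (by omega) (cartan_spec (mat_det _) (d - p))
  refine ⟨?_, ?_, ?_⟩
  · unfold HasGap
    rw [hsvp, sv_eq (S.svd n t) p hp]
    exact hgap' n t le_rfl hnt htm.le hLn.le
  · unfold HasGap
    rw [hinv.1, hinv.2]
    exact inv_strictAnti₀ (S.pos _ _ _) (hgap' t m hnt.le htm le_rfl hLm.le)
  · refine lt_of_lt_of_le (half_lt_self hη) ?_
    unfold subAngle
    obtain ⟨u0, hu0, hu0'⟩ := hA.2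
    obtain ⟨y0, hy0, hy0'⟩ := hB.2
    refine le_csInf ⟨InnerProductGeometry.angle u0 y0, u0, hu0, hu0', y0, hy0, hy0', rfl⟩ ?_
    rintro θ ⟨v, hv, hv0, w, hw, hw0, rfl⟩
    by_contra hlt
    push Not at hlt
    have hvn : 0 < ‖v‖ := norm_pos_iff.2 hv0
    have hwn : 0 < ‖w‖ := norm_pos_iff.2 hw0
    obtain ⟨u, hu⟩ : ∃ u : Euc d, u = ‖v‖⁻¹ • v := ⟨_, rfl⟩
    obtain ⟨y, hy⟩ : ∃ y : Euc d, y = ‖w‖⁻¹ • w := ⟨_, rfl⟩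
    have hun : ‖u‖ = 1 := by rw [hu, norm_smul, norm_inv, norm_norm, inv_mul_cancel₀ hvn.ne']
    have hyn : ‖y‖ = 1 := by rw [hy, norm_smul, norm_inv, norm_norm, inv_mul_cancel₀ hwn.ne']
    have hang : InnerProductGeometry.angle u y = InnerProductGeometry.angle v w := by
      rw [hu, hy, InnerProductGeometry.angle_smul_left_of_pos _ _ (inv_pos.2 hvn),
        InnerProductGeometry.angle_smul_right_of_pos _ _ (inv_pos.2 hwn)]
    have huy : ‖u - y‖ ≤ η := by
      have := norm_sub_le_angle hun hyn
      rw [hang] at this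
      linarith
    have huU := Submodule.smul_mem _ ‖v‖⁻¹ hv
    have hyU := Submodule.smul_mem _ ‖w‖⁻¹ hw
    rw [← hu] at huU
    rw [← hy] at hyU
    obtain ⟨x, hx⟩ : ∃ x : Euc d, x = act (mat (prodSeq gseq n (t - n).toNat)⁻¹) u := ⟨_, rfl⟩
    have hxu : act (mat (prodSeq gseq n (t - n).toNat)) x = u := by
      rw [hx, ← act_mul, mat_mul_inv, act_one]
    have hxs := hA.1 u huU x hxu
    rw [hsvp, hun] at hxs
    have hys := hB.1 y hyU (act (mat (prodSeq gseq t (m - t).toNat)) y)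
      (by rw [← act_mul, mat_inv_mul, act_one])
    rw [hinv.1, hyn, inv_mul_le_iff₀ (S.pos _ _ _), mul_one] at hys
    have hLTz : (2 : ℤ) ^ N * L0 < L := by exact_mod_cast hLT
    have hLTr : (2 : ℝ) ^ N * L0 < L := by exact_mod_cast hLT
    have hLnr : (L : ℝ) ≤ (t : ℝ) - n := by exact_mod_cast hLn.le
    have hLmr : (L : ℝ) ≤ (m : ℝ) - t := by exact_mod_cast hLm.le
    exact S.failure (t0 := t) (L := L) hL0 rfl hnt.le (by omega) hLnr hLmr hLTr hκ hK2 hE1 hE2 hN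
      hsmall hun huy hxu hxs hys

end Paper
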